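/- Fix an integer n1 ≥ 1. For every ε ∈ (0,1) and every ρ > 3/2, there exist an elastic collision system S of 2·n1 + 1 unit discs in ℝ² on the time interval ℝ, labeled as described below (with m = 1), and a time T0 < 0 such that: (i) no collisions occur in (−∞, T0]; (ii) exactly n1·(n1−1) collisions occur in (T0, 0); (iii) S satisfies (ε,ρ) initial conditions at time 0; and (iv) |DS(0)| = 1 and |Da_1(0) − w0| ≤ ε. -/

import Mathlib

open scoped RealInnerProductSpace

noncomputable section

/-- An elastic collision system of unit balls in `ℝ^d`, indexed by `ι`, on the time
interval `I ⊆ ℝ`.  `x i` is the trajectory of the center of ball `i`, `vr i t` its right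
derivative (velocity) at time `t` and `vl i t` its left derivative (which, for a
continuous piecewise linear trajectory, is the left limit of the right derivative).
Fields `right_lin` and `left_lin` say that each trajectory is (locally) linear to the
right and to the left of every time, with the indicated one-sided derivatives; this
encodes continuity and piecewise linearity with locally finitely many breakpoints.
`dist_ge` says the closed unit balls have disjoint interiors, and `collision_rule` is
the elastic collision rule. -/
structure BallSystem (ι : Type) (d : ℕ) (I : Set ℝ) where
  x : ι → ℝ → EuclideanSpace ℝ (Fin d)
  vr : ι → ℝ → EuclideanSpace ℝ (Fin d)
  vl : ι → ℝ → EuclideanSpace ℝ (Fin d)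
  right_lin : ∀ i, ∀ t ∈ I, ∃ ε > 0, ∀ s ∈ Set.Icc t (t + ε) ∩ I,
    x i s = x i t + (s - t) • vr i t
  left_lin : ∀ i, ∀ t ∈ I, ∃ ε > 0, ∀ s ∈ Set.Icc (t - ε) t ∩ I,
    x i s = x i t + (s - t) • vl i t
  dist_ge : ∀ i j, i ≠ j → ∀ t ∈ I, 2 ≤ ‖x i t - x j t‖
  collision_rule : ∀ i, ∀ t ∈ I, (∃ s ∈ I, s < t) → vr i t ≠ vl i t →
    ∃ j, j ≠ i ∧ ‖x i t - x j t‖ = 2 ∧ vr j t ≠ vl j t ∧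
      (∀ k, k ≠ i → ‖x i t - x k t‖ = 2 → k = j) ∧
      (∀ k, k ≠ i → k ≠ j → vr k t = vl k t) ∧
      vr i t = vl i t -
        ⟪vl i t - vl j t, (2⁻¹ : ℝ) • (x i t - x j t)⟫ • ((2⁻¹ : ℝ) • (x i t - x j t)) ∧
      vr j t = vl j t +
        ⟪vl i t - vl j t, (2⁻¹ : ℝ) • (x i t - x j t)⟫ • ((2⁻¹ : ℝ) • (x i t - x j t))

/-- The set of collisions of the system: pairs `(t, {i,j})` such that at time `t` the
balls `i` and `j` are tangent and both of their velocities change at `t`. -/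
def BallSystem.collisions {ι : Type} [DecidableEq ι] {d : ℕ} {I : Set ℝ}
    (S : BallSystem ι d I) : Set (ℝ × Finset ι) :=
  {p | p.1 ∈ I ∧ (∃ s ∈ I, s < p.1) ∧ ∃ i j : ι, i ≠ j ∧ p.2 = {i, j} ∧
    ‖S.x i p.1 - S.x j p.1‖ = 2 ∧ S.vr i p.1 ≠ S.vl i p.1 ∧ S.vr j p.1 ≠ S.vl j p.1}

/-- The Euclidean norm `|DS(t)|` of the concatenated velocity vector of the system. -/
def BallSystem.speedNorm {ι : Type} [Fintype ι] {d : ℕ} {I : Set ℝ}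
    (S : BallSystem ι d I) (t : ℝ) : ℝ :=
  Real.sqrt (∑ i, ‖S.vr i t‖ ^ 2)

/-- `w0 = (0,1)`. -/
def w0 : EuclideanSpace ℝ (Fin 2) := (EuclideanSpace.equiv (Fin 2) ℝ).symm ![0, 1]
/-- `u0 = (1,0)`. -/
def u0 : EuclideanSpace ℝ (Fin 2) := (EuclideanSpace.equiv (Fin 2) ℝ).symm ![1, 0]
/-- `w1 = (-√3/2, 1/2)`. -/
def w1 : EuclideanSpace ℝ (Fin 2) :=
  (EuclideanSpace.equiv (Fin 2) ℝ).symm ![-(Real.sqrt 3 / 2), 1 / 2]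
/-- `w2 = (√3/2, 1/2)`. -/
def w2 : EuclideanSpace ℝ (Fin 2) :=
  (EuclideanSpace.equiv (Fin 2) ℝ).symm ![Real.sqrt 3 / 2, 1 / 2]
/-- `u1 = (1/2, √3/2)`. -/
def u1 : EuclideanSpace ℝ (Fin 2) :=
  (EuclideanSpace.equiv (Fin 2) ℝ).symm ![1 / 2, Real.sqrt 3 / 2]
/-- `u2 = (-1/2, √3/2)`. -/
def u2 : EuclideanSpace ℝ (Fin 2) :=
  (EuclideanSpace.equiv (Fin 2) ℝ).symm ![-(1 / 2), Real.sqrt 3 / 2]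

/-- Index type for the `2·n1 + m` discs `A_m,…,A_1,B_1,…,B_{n1},C_1,…,C_{n1}`:
`Sum.inl k` is the disc `A_{k+1}` (so `Sum.inl 0` is `A_1`), `Sum.inr (Sum.inl j)` is
`B_{j+1}` and `Sum.inr (Sum.inr j)` is `C_{j+1}`. -/
abbrev BBIndex (m n1 : ℕ) : Type := Fin m ⊕ (Fin n1 ⊕ Fin n1)

/-- The `(ε,ρ)` initial conditions at time `t0` for a system of `2·n1 + m` discs
labeled `A_m,…,A_1,B_1,…,B_{n1},C_1,…,C_{n1}` (with `b_0 = c_0 = a_1`):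
(i) `w1·a_1 ≥ 0`, `w2·a_1 ≥ 0`, `w0·a_1 ≤ ε`;
(ii) `|u0·a_k| ≤ ε` for `k = 2,…,m`, `|u1·b_j| ≤ ε` and `|u2·c_j| ≤ ε` for
`j = 0,…,n1`;
(iii) every gap `Γ^A_k`, `Γ^B_k`, `Γ^C_k` lies in `[ε/ρ, ε]`;
(iv) the ratio of the gaps `Γ^B_1` and `Γ^C_1` (in one order or the other) is `≤ 2/3`. -/
def InitCond (m n1 : ℕ) (hm : 0 < m) (hn1 : 0 < n1)
    (S : BallSystem (BBIndex m n1) 2 Set.univ) (ε ρ t0 : ℝ) : Prop :=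
  let a : Fin m → ℝ → EuclideanSpace ℝ (Fin 2) := fun k => S.x (Sum.inl k)
  let b : Fin n1 → ℝ → EuclideanSpace ℝ (Fin 2) := fun j => S.x (Sum.inr (Sum.inl j))
  let c : Fin n1 → ℝ → EuclideanSpace ℝ (Fin 2) := fun j => S.x (Sum.inr (Sum.inr j))
  -- (i)
  (0 ≤ ⟪w1, a ⟨0, hm⟩ t0⟫ ∧ 0 ≤ ⟪w2, a ⟨0, hm⟩ t0⟫ ∧ ⟪w0, a ⟨0, hm⟩ t0⟫ ≤ ε) ∧
  -- (ii)
  (∀ k : Fin m, 0 < (k : ℕ) → |⟪u0, a k t0⟫| ≤ ε) ∧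
  (|⟪u1, a ⟨0, hm⟩ t0⟫| ≤ ε) ∧ (∀ j : Fin n1, |⟪u1, b j t0⟫| ≤ ε) ∧
  (|⟪u2, a ⟨0, hm⟩ t0⟫| ≤ ε) ∧ (∀ j : Fin n1, |⟪u2, c j t0⟫| ≤ ε) ∧
  -- (iii): gaps `Γ^A_k`, `k = 2,…,m`
  (∀ i : ℕ, ∀ h : i + 1 < m,
    ε * ρ⁻¹ ≤ ⟪w0, a ⟨i, by omega⟩ t0 - a ⟨i + 1, h⟩ t0⟫ - 2 ∧
      ⟪w0, a ⟨i, by omega⟩ t0 - a ⟨i + 1, h⟩ t0⟫ - 2 ≤ ε) ∧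
  -- (iii): gap `Γ^B_1` (recall `b_0 = a_1`)
  (ε * ρ⁻¹ ≤ ⟪w1, b ⟨0, hn1⟩ t0 - a ⟨0, hm⟩ t0⟫ - 2 ∧
    ⟪w1, b ⟨0, hn1⟩ t0 - a ⟨0, hm⟩ t0⟫ - 2 ≤ ε) ∧
  -- (iii): gaps `Γ^B_k`, `k = 2,…,n1`
  (∀ i : ℕ, ∀ h : i + 1 < n1,
    ε * ρ⁻¹ ≤ ⟪w1, b ⟨i + 1, h⟩ t0 - b ⟨i, by omega⟩ t0⟫ - 2 ∧
      ⟪w1, b ⟨i + 1, h⟩ t0 - b ⟨i, by omega⟩ t0⟫ - 2 ≤ ε) ∧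
  -- (iii): gap `Γ^C_1`
  (ε * ρ⁻¹ ≤ ⟪w2, c ⟨0, hn1⟩ t0 - a ⟨0, hm⟩ t0⟫ - 2 ∧
    ⟪w2, c ⟨0, hn1⟩ t0 - a ⟨0, hm⟩ t0⟫ - 2 ≤ ε) ∧
  -- (iii): gaps `Γ^C_k`, `k = 2,…,n1`
  (∀ i : ℕ, ∀ h : i + 1 < n1,
    ε * ρ⁻¹ ≤ ⟪w2, c ⟨i + 1, h⟩ t0 - c ⟨i, by omega⟩ t0⟫ - 2 ∧
      ⟪w2, c ⟨i + 1, h⟩ t0 - c ⟨i, by omega⟩ t0⟫ - 2 ≤ ε) ∧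
  -- (iv)
  ((⟪w1, b ⟨0, hn1⟩ t0 - a ⟨0, hm⟩ t0⟫ - 2) /
      (⟪w2, c ⟨0, hn1⟩ t0 - a ⟨0, hm⟩ t0⟫ - 2) ≤ 2 / 3 ∨
    (⟪w2, c ⟨0, hn1⟩ t0 - a ⟨0, hm⟩ t0⟫ - 2) /
      (⟪w1, b ⟨0, hn1⟩ t0 - a ⟨0, hm⟩ t0⟫ - 2) ≤ 2 / 3)

end

/-! ### Straight lines and the ball of radius two -/

namespace HardBalls

open Filter Topology

section Line

variable {V : Type*} [NormedAddCommGroup V] [InnerProductSpace ℝ V]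

/-- A quarter of the discriminant of the quadratic polynomial `t ↦ ‖P + t v‖² - 4`. -/
noncomputable def disc (P v : V) : ℝ := ⟪P, v⟫ ^ 2 - ‖v‖ ^ 2 * (‖P‖ ^ 2 - 4)

/-- The smaller root of `t ↦ ‖P + t v‖² - 4`. -/
noncomputable def entryTime (P v : V) : ℝ := (-⟪P, v⟫ - √(disc P v)) / ‖v‖ ^ 2

lemma inner_line (P v : V) (t : ℝ) : ⟪P + t • v, v⟫ = ⟪P, v⟫ + t * ‖v‖ ^ 2 := by
  rw [inner_add_left, real_inner_smul_left, real_inner_self_eq_norm_sq]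

lemma norm_sq_line (P v : V) (t : ℝ) :
    ‖P + t • v‖ ^ 2 = ‖P‖ ^ 2 + 2 * t * ⟪P, v⟫ + t ^ 2 * ‖v‖ ^ 2 := by
  rw [norm_add_sq_real, real_inner_smul_right, norm_smul, mul_pow, Real.norm_eq_abs, sq_abs]
  ring

lemma disc_line (P v : V) (t : ℝ) : disc (P + t • v) v = disc P v := by
  simp only [disc, inner_line, norm_sq_line]
  ring

lemma norm_sq_line_shift (P v : V) (t s : ℝ) : ‖P + s • v‖ ^ 2 =
    ‖P + t • v‖ ^ 2 + 2 * (s - t) * ⟪P + t • v, v⟫ + (s - t) ^ 2 * ‖v‖ ^ 2 := by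
  simp only [inner_line, norm_sq_line]
  ring

lemma ne_zero_of_disc_pos {P v : V} (h : 0 < disc P v) : 0 < ‖v‖ := by
  rcases (norm_nonneg v).lt_or_eq with h' | h'
  · exact h'
  · have : v = 0 := norm_eq_zero.1 h'.symm
    simp [disc, this] at h

lemma inner_entryTime {P v : V} (h : 0 < disc P v) :
    ⟪P + entryTime P v • v, v⟫ = -√(disc P v) := by
  have := ne_zero_of_disc_pos h
  rw [inner_line, entryTime]
  field_simp
  ring

lemma norm_entryTime {P v : V} (h : 0 < disc P v) : ‖P + entryTime P v • v‖ = 2 := by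
  have hv := ne_zero_of_disc_pos h
  have h1 := disc_line P v (entryTime P v)
  rw [disc, inner_entryTime h, neg_sq, Real.sq_sqrt h.le] at h1
  have h2 : ‖P + entryTime P v • v‖ ^ 2 - 4 = 0 := by
    have h3 : ‖v‖ ^ 2 * (‖P + entryTime P v • v‖ ^ 2 - 4) = 0 := by linarith
    exact (mul_eq_zero.1 h3).resolve_left (by positivity)
  nlinarith [norm_nonneg (P + entryTime P v • v)]

lemma inner_entryTime_neg {P v : V} (h : 0 < disc P v) : ⟪P + entryTime P v • v, v⟫ < 0 := by
  rw [inner_entryTime h]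
  simpa using Real.sqrt_pos.2 h

lemma disc_eq_of_norm_eq {P v : V} {t : ℝ} (h : ‖P + t • v‖ = 2) :
    disc P v = ⟪P + t • v, v⟫ ^ 2 := by
  rw [← disc_line P v t, disc, h]
  ring

lemma disc_pos_of_entry {P v : V} {t : ℝ} (h : ‖P + t • v‖ = 2) (h' : ⟪P + t • v, v⟫ < 0) :
    0 < disc P v := by
  rw [disc_eq_of_norm_eq h]
  exact sq_pos_of_neg h'

lemma entryTime_eq {P v : V} {t : ℝ} (h : ‖P + t • v‖ = 2) (h' : ⟪P + t • v, v⟫ < 0) :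
    entryTime P v = t := by
  have hd := disc_pos_of_entry h h'
  have hv := ne_zero_of_disc_pos hd
  have h1 := inner_entryTime hd
  rw [disc_eq_of_norm_eq h, Real.sqrt_sq_eq_abs, abs_of_neg h', neg_neg, inner_line,
    inner_line] at h1
  have h2 : entryTime P v * ‖v‖ ^ 2 = t * ‖v‖ ^ 2 := by linarith
  exact mul_right_cancel₀ (by positivity) h2

/-- A line which starts outside of the ball and meets its interior has an entry time. -/
lemma exists_entry {P v : V} {τ t : ℝ} (hτt : τ ≤ t) (h2 : 2 ≤ ‖P + τ • v‖)
    (hout : ‖P + τ • v‖ = 2 → 0 < ⟪P + τ • v, v⟫) (ht : ‖P + t • v‖ < 2) :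
    0 < disc P v ∧ τ < entryTime P v ∧ entryTime P v < t := by
  have hlt : ‖P + t • v‖ ^ 2 < 4 := by nlinarith [norm_nonneg (P + t • v)]
  have hge : 4 ≤ ‖P + τ • v‖ ^ 2 := by nlinarith
  have hv : 0 < ‖v‖ := by
    rcases (norm_nonneg v).lt_or_eq with h' | h'
    · exact h'
    · have : v = 0 := norm_eq_zero.1 h'.symm
      simp only [this, smul_zero, add_zero] at hlt hge
      linarith
  have hv2 : 0 < ‖v‖ ^ 2 := by positivity
  have d1 : disc P v = ⟪P + t • v, v⟫ ^ 2 - ‖v‖ ^ 2 * (‖P + t • v‖ ^ 2 - 4) :=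
    (disc_line P v t).symm
  have d2 : disc P v = ⟪P + τ • v, v⟫ ^ 2 - ‖v‖ ^ 2 * (‖P + τ • v‖ ^ 2 - 4) :=
    (disc_line P v τ).symm
  have hpos : 0 < disc P v := by nlinarith [sq_nonneg ⟪P + t • v, v⟫]
  have hsq := Real.sq_sqrt hpos.le
  have hs := Real.sqrt_pos.2 hpos
  have he := inner_entryTime hpos
  have hmono : ∀ a b : ℝ, ⟪P + a • v, v⟫ < ⟪P + b • v, v⟫ → a < b := by
    intro a b h
    rw [inner_line, inner_line] at h
    by_contra! hba
    nlinarith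
  have hlt1 : ⟪P + t • v, v⟫ ^ 2 < √(disc P v) ^ 2 := by nlinarith
  have habs := abs_lt_of_sq_lt_sq' hlt1 hs.le
  have hmono' : ⟪P + τ • v, v⟫ ≤ ⟪P + t • v, v⟫ := by
    rw [inner_line, inner_line]
    nlinarith
  refine ⟨hpos, ?_, hmono _ _ (by rw [he]; exact habs.1)⟩
  by_contra! hcon
  have h3 : -√(disc P v) ≤ ⟪P + τ • v, v⟫ := by
    rw [← he, inner_line, inner_line]
    nlinarith
  rcases h3.lt_or_eq with h4 | h4
  · have : ⟪P + τ • v, v⟫ ^ 2 < √(disc P v) ^ 2 := sq_lt_sq' h4 (by linarith [habs.2])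
    nlinarith
  · have h5 : ‖P + τ • v‖ ^ 2 - 4 = 0 := by
      have : ‖v‖ ^ 2 * (‖P + τ • v‖ ^ 2 - 4) = 0 := by
        rw [← h4] at d2
        nlinarith
      exact (mul_eq_zero.1 this).resolve_left hv2.ne'
    have h6 : ‖P + τ • v‖ = 2 := by nlinarith [norm_nonneg (P + τ • v)]
    linarith [hout h6]

/-- Contact at the end of an interval on which the line stays outside of the ball. -/
lemma inner_neg_of_contact {P v : V} {τ t : ℝ} (hτt : τ < t)
    (h2 : ∀ s ∈ Set.Icc τ t, 2 ≤ ‖P + s • v‖) (ht : ‖P + t • v‖ = 2) (hd : disc P v ≠ 0) :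
    ⟪P + t • v, v⟫ < 0 := by
  rw [disc_eq_of_norm_eq ht] at hd
  have hne : ⟪P + t • v, v⟫ ≠ 0 := fun h => hd (by rw [h]; norm_num)
  by_contra! hcon
  have hp : 0 < ⟪P + t • v, v⟫ := lt_of_le_of_ne hcon hne.symm
  obtain ⟨η, hη0, hη1, hη2⟩ : ∃ η : ℝ, 0 < η ∧ η ≤ t - τ ∧ η * ‖v‖ ^ 2 < 2 * ⟪P + t • v, v⟫ := by
    refine ⟨min (t - τ) (⟪P + t • v, v⟫ / (‖v‖ ^ 2 + 1)), by
      have : 0 < t - τ := by linarith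
      positivity, min_le_left _ _, ?_⟩
    have h1 : min (t - τ) (⟪P + t • v, v⟫ / (‖v‖ ^ 2 + 1)) * (‖v‖ ^ 2 + 1) ≤ ⟪P + t • v, v⟫ :=
      (le_div_iff₀ (by positivity)).1 (min_le_right _ _)
    have h2 : 0 < min (t - τ) (⟪P + t • v, v⟫ / (‖v‖ ^ 2 + 1)) := by
      have : 0 < t - τ := by linarith
      positivity
    nlinarith
  have h3 := h2 (t - η) ⟨by linarith, by linarith⟩
  have h4 := norm_sq_line_shift P v t (t - η)
  rw [ht] at h4
  nlinarith

lemma disc_neg (P v : V) : disc (-P) (-v) = disc P v := by simp [disc]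

lemma disc_neg_right (P v : V) : disc P (-v) = disc P v := by simp [disc]

lemma continuous_disc : Continuous fun q : V × V => disc q.1 q.2 := by
  unfold disc
  fun_prop

lemma continuousAt_entryTime {P v : V} (h : 0 < disc P v) :
    ContinuousAt (fun q : V × V => entryTime q.1 q.2) (P, v) := by
  unfold entryTime
  have hv := ne_zero_of_disc_pos h
  have := continuous_disc (V := V)
  apply ContinuousAt.div
  · fun_prop
  · fun_prop
  · positivity

end Line

/-! ### Line data of several balls and their elastic reflections -/

set_option linter.unusedSectionVars false

section LineData

variable {ι V : Type*} [DecidableEq ι] [NormedAddCommGroup V] [InnerProductSpace ℝ V]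

/-- The relative position of two balls at time `t`, for balls moving along straight lines with
positions `s.1` at time `0` and velocities `s.2`. -/
def relPos (s : (ι → V) × (ι → V)) (i j : ι) (t : ℝ) : V :=
  (s.1 i - s.1 j) + t • (s.2 i - s.2 j)

/-- The relative velocity of two balls. -/
def relVel (s : (ι → V) × (ι → V)) (i j : ι) : V := s.2 i - s.2 j

noncomputable def pairDisc (s : (ι → V) × (ι → V)) (i j : ι) : ℝ :=
  disc (s.1 i - s.1 j) (s.2 i - s.2 j)

noncomputable def pairTime (s : (ι → V) × (ι → V)) (i j : ι) : ℝ :=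
  entryTime (s.1 i - s.1 j) (s.2 i - s.2 j)

/-- Balls `i` and `j` run into each other at time `t`. -/
def IsEntry (s : (ι → V) × (ι → V)) (i j : ι) (t : ℝ) : Prop :=
  ‖relPos s i j t‖ = 2 ∧ ⟪relPos s i j t, relVel s i j⟫ < 0

/-- The family of vectors with entries `u` at `i`, `-u` at `j`, and `0` elsewhere. -/
def dipole (i j : ι) (u : V) : ι → V := Pi.single i u - Pi.single j u

/-- The size of the impulse exchanged by balls `i` and `j`, with respect to half of their
relative position at the collision. -/
noncomputable def impulse (s : (ι → V) × (ι → V)) (i j : ι) : ℝ :=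
  -⟪(2⁻¹ : ℝ) • relPos s i j (pairTime s i j), relVel s i j⟫

/-- The change of velocities in the collision of balls `i` and `j`. -/
noncomputable def kick (s : (ι → V) × (ι → V)) (i j : ι) : ι → V :=
  impulse s i j • dipole i j ((2⁻¹ : ℝ) • relPos s i j (pairTime s i j))

/-- Line data after the collision of balls `i` and `j`. -/
noncomputable def reflect (i j : ι) (s : (ι → V) × (ι → V)) : (ι → V) × (ι → V) :=
  (s.1 - pairTime s i j • kick s i j, s.2 + kick s i j)

/-- Time reversal of line data. -/
def reverse (s : (ι → V) × (ι → V)) : (ι → V) × (ι → V) := (s.1, -s.2)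

lemma relPos_eq (s : (ι → V) × (ι → V)) (i j : ι) (t : ℝ) :
    relPos s i j t = (s.1 i + t • s.2 i) - (s.1 j + t • s.2 j) := by
  rw [relPos, smul_sub]
  abel

lemma dipole_left {i j : ι} (h : i ≠ j) (u : V) : dipole i j u i = u := by
  simp [dipole, h]

lemma dipole_right {i j : ι} (h : i ≠ j) (u : V) : dipole i j u j = -u := by
  simp [dipole, h.symm]

lemma dipole_other {i j k : ι} (hi : k ≠ i) (hj : k ≠ j) (u : V) : dipole i j u k = 0 := by
  simp [dipole, hi, hj]

lemma dipole_swap (i j : ι) (u : V) : dipole j i (-u) = dipole i j u := by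
  simp only [dipole, Pi.single_neg]
  abel

lemma relPos_swap (s : (ι → V) × (ι → V)) (i j : ι) (t : ℝ) :
    relPos s j i t = -relPos s i j t := by
  rw [relPos_eq, relPos_eq, neg_sub]

lemma relVel_swap (s : (ι → V) × (ι → V)) (i j : ι) : relVel s j i = -relVel s i j := by
  rw [relVel, relVel, neg_sub]

lemma pairTime_swap (s : (ι → V) × (ι → V)) (i j : ι) : pairTime s j i = pairTime s i j := by
  rw [pairTime, pairTime, entryTime, entryTime, ← disc_neg, ← inner_neg_neg, ← norm_neg (s.2 j - _)]
  simp only [neg_sub]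

lemma IsEntry.symm {s : (ι → V) × (ι → V)} {i j : ι} {t : ℝ} (h : IsEntry s i j t) :
    IsEntry s j i t := by
  rw [IsEntry, relPos_swap s i j, relVel_swap s i j, norm_neg, inner_neg_neg]
  exact h

lemma impulse_swap (s : (ι → V) × (ι → V)) (i j : ι) : impulse s j i = impulse s i j := by
  rw [impulse, impulse, relPos_swap s i j, relVel_swap s i j, pairTime_swap, smul_neg,
    inner_neg_neg]

lemma kick_swap (s : (ι → V) × (ι → V)) (i j : ι) : kick s j i = kick s i j := by
  rw [kick, kick, impulse_swap, relPos_swap s i j, pairTime_swap, smul_neg, dipole_swap]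

lemma reflect_swap (i j : ι) (s : (ι → V) × (ι → V)) : reflect j i s = reflect i j s := by
  rw [reflect, reflect, kick_swap, pairTime_swap]

lemma isEntry_pairTime {s : (ι → V) × (ι → V)} {i j : ι} (h : 0 < pairDisc s i j) :
    IsEntry s i j (pairTime s i j) :=
  ⟨norm_entryTime h, inner_entryTime_neg h⟩

lemma IsEntry.pairDisc_pos {s : (ι → V) × (ι → V)} {i j : ι} {t : ℝ} (h : IsEntry s i j t) :
    0 < pairDisc s i j := disc_pos_of_entry h.1 h.2

lemma IsEntry.pairTime_eq {s : (ι → V) × (ι → V)} {i j : ι} {t : ℝ} (h : IsEntry s i j t) :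
    pairTime s i j = t := entryTime_eq h.1 h.2

lemma IsEntry.ne {s : (ι → V) × (ι → V)} {i j : ι} {t : ℝ} (h : IsEntry s i j t) : i ≠ j := by
  rintro rfl
  have := h.1
  simp [relPos] at this

/-- Balls are at the same places before and after a collision. -/
lemma reflect_pos (i j k : ι) (s : (ι → V) × (ι → V)) :
    (reflect i j s).1 k + pairTime s i j • (reflect i j s).2 k =
      s.1 k + pairTime s i j • s.2 k := by
  simp only [reflect, Pi.sub_apply, Pi.add_apply, Pi.smul_apply, smul_add]
  abel

lemma relPos_reflect (i j k l : ι) (s : (ι → V) × (ι → V)) :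
    relPos (reflect i j s) k l (pairTime s i j) = relPos s k l (pairTime s i j) := by
  rw [relPos_eq, relPos_eq, reflect_pos, reflect_pos]

lemma inner_relVel_reflect {s : (ι → V) × (ι → V)} {i j : ι} (h : 0 < pairDisc s i j) :
    ⟪relPos s i j (pairTime s i j), relVel (reflect i j s) i j⟫ =
      -⟪relPos s i j (pairTime s i j), relVel s i j⟫ := by
  have he := isEntry_pairTime h
  have hij := he.ne
  have h1 : relVel (reflect i j s) i j =
      relVel s i j + impulse s i j • relPos s i j (pairTime s i j) := by
    simp only [relVel, reflect, kick, Pi.add_apply, Pi.smul_apply, dipole_left hij,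
      dipole_right hij]
    module
  rw [h1, inner_add_right, real_inner_smul_right, real_inner_self_eq_norm_sq, he.1, impulse,
    real_inner_smul_left]
  ring

lemma pairDisc_reflect {s : (ι → V) × (ι → V)} {i j : ι} (h : 0 < pairDisc s i j) :
    0 < pairDisc (reflect i j s) i j := by
  have he := isEntry_pairTime h
  have h1 : ‖(reflect i j s).1 i - (reflect i j s).1 j +
      pairTime s i j • ((reflect i j s).2 i - (reflect i j s).2 j)‖ = 2 := by
    have := relPos_reflect i j i j s
    rw [relPos] at this
    rw [this, he.1]
  rw [pairDisc, disc_eq_of_norm_eq h1]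
  have h2 := inner_relVel_reflect h
  have h3 : (reflect i j s).1 i - (reflect i j s).1 j +
      pairTime s i j • ((reflect i j s).2 i - (reflect i j s).2 j) =
      relPos s i j (pairTime s i j) := relPos_reflect i j i j s
  rw [relVel] at h2
  rw [h3, h2]
  exact sq_pos_of_pos (by linarith [he.2])

lemma relPos_reverse (s : (ι → V) × (ι → V)) (i j : ι) (t : ℝ) :
    relPos (reverse s) i j (-t) = relPos s i j t := by
  simp [relPos_eq, reverse]

lemma relVel_reverse (s : (ι → V) × (ι → V)) (i j : ι) :
    relVel (reverse s) i j = -relVel s i j := by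
  simp only [relVel, reverse, Pi.neg_apply]
  abel

lemma pairDisc_reverse (s : (ι → V) × (ι → V)) (i j : ι) :
    pairDisc (reverse s) i j = pairDisc s i j := by
  rw [pairDisc, pairDisc, ← disc_neg_right]
  simp only [reverse, Pi.neg_apply]
  congr 1
  abel

lemma reverse_reverse (s : (ι → V) × (ι → V)) : reverse (reverse s) = s := by
  simp [reverse]

/-- Collisions are reversible. -/
lemma reverse_reflect {s : (ι → V) × (ι → V)} {i j : ι} (h : 0 < pairDisc s i j) :
    reverse (reflect i j (reverse (reflect i j s))) = s := by
  have he := isEntry_pairTime h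
  have hX : relPos (reverse (reflect i j s)) i j (-pairTime s i j) =
      relPos s i j (pairTime s i j) := by rw [relPos_reverse, relPos_reflect]
  have he' : IsEntry (reverse (reflect i j s)) i j (-pairTime s i j) := by
    rw [IsEntry, hX, relVel_reverse, inner_neg_right, inner_relVel_reflect h, neg_neg]
    exact he
  have hi : impulse (reverse (reflect i j s)) i j = impulse s i j := by
    rw [impulse, he'.pairTime_eq, hX, relVel_reverse, inner_neg_right, real_inner_smul_left,
      inner_relVel_reflect h, impulse, real_inner_smul_left]
    ring
  have hk : kick (reverse (reflect i j s)) i j = kick s i j := by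
    rw [kick, he'.pairTime_eq, hX, hi, kick]
  rw [reflect, hk, he'.pairTime_eq]
  simp only [reverse, reflect]
  ext k <;> simp

lemma reflect_reverse {s : (ι → V) × (ι → V)} {i j : ι} (h : 0 < pairDisc s i j) :
    reflect i j (reverse (reflect i j (reverse s))) = s := by
  have h1 := reverse_reflect (s := reverse s) (i := i) (j := j) (by rwa [pairDisc_reverse])
  have h2 := congrArg reverse h1
  rwa [reverse_reverse, reverse_reverse] at h2

lemma continuous_pairDisc (i j : ι) :
    Continuous fun s : (ι → V) × (ι → V) => pairDisc s i j := by
  unfold pairDisc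
  exact continuous_disc.comp (by fun_prop :
    Continuous fun s : (ι → V) × (ι → V) => (s.1 i - s.1 j, s.2 i - s.2 j))

lemma continuousAt_pairTime {i j : ι} {s : (ι → V) × (ι → V)} (h : 0 < pairDisc s i j) :
    ContinuousAt (fun s : (ι → V) × (ι → V) => pairTime s i j) s := by
  unfold pairTime
  exact ContinuousAt.comp (f := fun s : (ι → V) × (ι → V) => (s.1 i - s.1 j, s.2 i - s.2 j))
    (g := fun q : V × V => entryTime q.1 q.2) (continuousAt_entryTime h) (by fun_prop)

lemma continuous_relPos (i j : ι) :
    Continuous fun q : ((ι → V) × (ι → V)) × ℝ => relPos q.1 i j q.2 := by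
  unfold relPos
  fun_prop

lemma continuous_relVel (i j : ι) :
    Continuous fun s : (ι → V) × (ι → V) => relVel s i j := by
  unfold relVel
  fun_prop

lemma continuous_dipole (i j : ι) : Continuous fun u : V => dipole i j u := by
  exact (continuous_single (A := fun _ => V) i).sub (continuous_single (A := fun _ => V) j)

lemma continuousAt_kick {i j : ι} {s : (ι → V) × (ι → V)} (h : 0 < pairDisc s i j) :
    ContinuousAt (fun s : (ι → V) × (ι → V) => kick s i j) s := by
  have h1 := continuousAt_pairTime h
  have h2 : ContinuousAt (fun s : (ι → V) × (ι → V) => relPos s i j (pairTime s i j)) s :=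
    ContinuousAt.comp (f := fun s : (ι → V) × (ι → V) => (s, pairTime s i j))
      (continuous_relPos i j).continuousAt (continuousAt_id.prodMk h1)
  have h3 := (continuous_relVel i j).continuousAt (x := s)
  have h4 : ContinuousAt
      (fun s : (ι → V) × (ι → V) => (2⁻¹ : ℝ) • relPos s i j (pairTime s i j)) s :=
    h2.const_smul _
  have h5 := (continuous_dipole i j).continuousAt.comp h4
  have h6 : ContinuousAt (fun s : (ι → V) × (ι → V) => impulse s i j) s := (h4.inner h3).neg
  exact h6.smul h5

lemma continuousAt_reflect {i j : ι} {s : (ι → V) × (ι → V)} (h : 0 < pairDisc s i j) :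
    ContinuousAt (reflect i j) s := by
  have h1 := continuousAt_pairTime h
  have h2 := continuousAt_kick h
  exact (continuousAt_fst.sub (h1.smul h2)).prodMk (continuousAt_snd.add h2)

lemma continuous_reverse : Continuous (reverse : (ι → V) × (ι → V) → (ι → V) × (ι → V)) := by
  unfold reverse
  fun_prop

end LineData

/-! ### Generic line data -/

section Generic

lemma residual_imp_of_subset_closure {X : Type*} [TopologicalSpace X] {H D : Set X}
    (hD : IsOpen D) (hHD : H ⊆ closure D) : ∀ᶠ s in residual X, s ∈ H → s ∈ D := by
  have h1 : IsOpen (D ∪ (closure H)ᶜ) := hD.union isClosed_closure.isOpen_compl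
  have h2 : Dense (D ∪ (closure H)ᶜ) := by
    intro x
    rw [closure_union]
    by_cases hx : x ∈ closure H
    · exact Or.inl (closure_minimal hHD isClosed_closure hx)
    · exact Or.inr (subset_closure hx)
  filter_upwards [residual_of_dense_open h1 h2] with s hs hsH
  exact hs.resolve_right fun h => h (subset_closure hsH)

variable {ι V : Type*} [Finite ι] [DecidableEq ι] [NormedAddCommGroup V] [InnerProductSpace ℝ V]

/-- No two balls graze each other, and no two pairs of balls run into each other simultaneously,
provided all balls move along straight lines. -/
def Generic (s : (ι → V) × (ι → V)) : Prop :=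
  (∀ i j, i ≠ j → pairDisc s i j ≠ 0) ∧
    ∀ i j k l, k ≠ l → k ≠ i → k ≠ j → 0 < pairDisc s i j → 0 < pairDisc s k l →
      pairTime s i j ≠ pairTime s k l

lemma dense_relVel_ne_zero [Nontrivial V] {i j : ι} (hij : i ≠ j) :
    Dense {s : (ι → V) × (ι → V) | relVel s i j ≠ 0} := by
  obtain ⟨w, hw⟩ := exists_ne (0 : V)
  intro s
  by_cases hs : relVel s i j = 0
  · have ht : Tendsto (fun η : ℝ => (s.1, s.2 + Pi.single i (η • w))) (𝓝[≠] 0) (𝓝 s) := by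
      have : Continuous (fun η : ℝ => (s.1, s.2 + Pi.single i (η • w))) := by
        have h1 := (continuous_single (A := fun _ : ι => V) i).comp
          (by fun_prop : Continuous fun η : ℝ => η • w)
        exact continuous_const.prodMk (continuous_const.add h1)
      have h2 := this.tendsto 0
      simp only [zero_smul, Pi.single_zero, add_zero] at h2
      exact h2.mono_left nhdsWithin_le_nhds
    refine mem_closure_of_tendsto ht ?_
    filter_upwards [self_mem_nhdsWithin] with η hη
    have h3 : relVel (s.1, s.2 + Pi.single i (η • w)) i j = η • w := by
      have : s.2 i - s.2 j = 0 := hs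
      simp only [relVel, Pi.add_apply, Pi.single_eq_same, Pi.single_eq_of_ne hij.symm, add_zero]
      rw [add_sub_right_comm, this, zero_add]
    rw [h3]
    exact smul_ne_zero hη hw
  · exact subset_closure hs

lemma dense_pairDisc_ne_zero [Nontrivial V] {i j : ι} (hij : i ≠ j) :
    Dense {s : (ι → V) × (ι → V) | pairDisc s i j ≠ 0} := by
  refine dense_closure.1 ((dense_relVel_ne_zero hij).mono ?_)
  intro s hs
  by_cases hd : pairDisc s i j = 0
  · have ht : Tendsto (fun η : ℝ => (s.1 + Pi.single i (η • (s.1 i - s.1 j)), s.2))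
        (𝓝[>] 0) (𝓝 s) := by
      have : Continuous (fun η : ℝ => (s.1 + Pi.single i (η • (s.1 i - s.1 j)), s.2)) := by
        have h1 := (continuous_single (A := fun _ : ι => V) i).comp
          (by fun_prop : Continuous fun η : ℝ => η • (s.1 i - s.1 j))
        exact (continuous_const.add h1).prodMk continuous_const
      have h2 := this.tendsto 0
      simp only [zero_smul, Pi.single_zero, add_zero] at h2
      exact h2.mono_left nhdsWithin_le_nhds
    refine mem_closure_of_tendsto ht ?_
    filter_upwards [self_mem_nhdsWithin] with η hη
    have hη' : (0 : ℝ) < η := hη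
    have h3 : pairDisc (s.1 + Pi.single i (η • (s.1 i - s.1 j)), s.2) i j =
        disc ((1 + η) • (s.1 i - s.1 j)) (s.2 i - s.2 j) := by
      simp only [pairDisc, Pi.add_apply, Pi.single_eq_same, Pi.single_eq_of_ne hij.symm, add_zero]
      congr 1
      module
    have hv : 0 < ‖s.2 i - s.2 j‖ := norm_pos_iff.2 hs
    rw [pairDisc, disc] at hd
    rw [h3, disc, real_inner_smul_left, norm_smul, mul_pow, mul_pow,
      Real.norm_eq_abs, sq_abs]
    intro h0
    have h4 : 4 * ‖s.2 i - s.2 j‖ ^ 2 * (η * (2 + η)) = 0 := by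
      linear_combination (1 + η) ^ 2 * hd - h0
    have h5 : 0 < 4 * ‖s.2 i - s.2 j‖ ^ 2 * (η * (2 + η)) := by positivity
    linarith
  · exact subset_closure hd

lemma pairTime_ne_eventually {i j k l : ι} (hkl : k ≠ l) (hki : k ≠ i)
    (hkj : k ≠ j) :
    ∀ᶠ s in residual ((ι → V) × (ι → V)), 0 < pairDisc s i j → 0 < pairDisc s k l →
      pairTime s i j ≠ pairTime s k l := by
  set H : Set ((ι → V) × (ι → V)) := {s | 0 < pairDisc s i j ∧ 0 < pairDisc s k l} with hH
  set D : Set ((ι → V) × (ι → V)) := {s | s ∈ H ∧ pairTime s i j ≠ pairTime s k l} with hDdef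
  have hHo : IsOpen H :=
    (isOpen_lt continuous_const (continuous_pairDisc i j)).inter
      (isOpen_lt continuous_const (continuous_pairDisc k l))
  have hDo : IsOpen D := by
    rw [isOpen_iff_mem_nhds]
    rintro s ⟨hs, hne⟩
    filter_upwards [hHo.mem_nhds hs,
      ((continuousAt_pairTime hs.1).sub (continuousAt_pairTime hs.2)).eventually_ne
        (sub_ne_zero.2 hne)] with t h1 h2
    exact ⟨h1, sub_ne_zero.1 h2⟩
  have hcl : H ⊆ closure D := by
    intro s hs
    by_cases hd : pairTime s i j = pairTime s k l
    · set f : ℝ → (ι → V) × (ι → V) :=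
        fun η => (s.1 + Pi.single k (η • (s.2 k - s.2 l)), s.2) with hf
      have hfk : ∀ η, (f η).1 k - (f η).1 l = (s.1 k - s.1 l) + η • (s.2 k - s.2 l) := by
        intro η
        simp only [hf, Pi.add_apply, Pi.single_eq_same, Pi.single_eq_of_ne hkl.symm, add_zero]
        abel
      have hfi : ∀ η, (f η).1 i - (f η).1 j = s.1 i - s.1 j := by
        intro η
        simp only [hf, Pi.add_apply, Pi.single_eq_of_ne hki.symm, Pi.single_eq_of_ne hkj.symm,
          add_zero]
      have ht : Tendsto f (𝓝[≠] 0) (𝓝 s) := by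
        have : Continuous f := by
          have h1 := (continuous_single (A := fun _ : ι => V) k).comp
            (by fun_prop : Continuous fun η : ℝ => η • (s.2 k - s.2 l))
          exact (continuous_const.add h1).prodMk continuous_const
        have h2 := this.tendsto 0
        simp only [hf, zero_smul, Pi.single_zero, add_zero] at h2
        exact h2.mono_left nhdsWithin_le_nhds
      refine mem_closure_of_tendsto ht ?_
      filter_upwards [self_mem_nhdsWithin] with η hη
      have e1 : pairDisc (f η) i j = pairDisc s i j := by rw [pairDisc, hfi, pairDisc]
      have e2 : pairDisc (f η) k l = pairDisc s k l := by
        rw [pairDisc, hfk, pairDisc]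
        exact disc_line _ _ _
      have e3 : pairTime (f η) i j = pairTime s i j := by rw [pairTime, hfi, pairTime]
      have e4 : pairTime (f η) k l = pairTime s k l - η := by
        have hent := isEntry_pairTime hs.2
        refine IsEntry.pairTime_eq ?_
        have : relPos (f η) k l (pairTime s k l - η) = relPos s k l (pairTime s k l) := by
          rw [relPos, hfk, relPos]
          simp only [hf]
          module
        rw [IsEntry, this]
        exact hent
      refine ⟨⟨by rw [e1]; exact hs.1, by rw [e2]; exact hs.2⟩, ?_⟩
      rw [e3, e4, hd]
      intro h
      exact hη (by simpa using (by linarith : η = 0))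
    · exact subset_closure ⟨hs, hd⟩
  filter_upwards [residual_imp_of_subset_closure hDo hcl] with s hs h1 h2
  exact (hs ⟨h1, h2⟩).2

lemma generic_eventually [Nontrivial V] : ∀ᶠ s in residual ((ι → V) × (ι → V)), Generic s := by
  have := Finite.to_countable (α := ι)
  refine Filter.Eventually.and ?_ ?_
  · simp only [eventually_countable_forall]
    intro i j hij
    exact residual_of_dense_open
      (isOpen_ne_fun (continuous_pairDisc i j) continuous_const) (dense_pairDisc_ne_zero hij)
  · simp only [eventually_countable_forall]
    intro i j k l hkl hki hkj
    exact pairTime_ne_eventually hkl hki hkj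

lemma reflect_eventually (i j : ι) {D : Set ((ι → V) × (ι → V))}
    (hD : D ∈ residual ((ι → V) × (ι → V))) :
    ∀ᶠ s in residual ((ι → V) × (ι → V)), 0 < pairDisc s i j → reflect i j s ∈ D := by
  obtain ⟨S, hSo, hSd, hSc, hSD⟩ := mem_residual_iff.1 hD
  have key : ∀ O ∈ S, ∀ᶠ s in residual ((ι → V) × (ι → V)),
      0 < pairDisc s i j → reflect i j s ∈ O := by
    intro O hO
    set H : Set ((ι → V) × (ι → V)) := {s | 0 < pairDisc s i j} with hH
    have hHo : IsOpen H := isOpen_lt continuous_const (continuous_pairDisc i j)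
    have hDo : IsOpen {s | s ∈ H ∧ reflect i j s ∈ O} := by
      rw [isOpen_iff_mem_nhds]
      rintro s ⟨hs, hr⟩
      filter_upwards [hHo.mem_nhds hs,
        (continuousAt_reflect hs).eventually ((hSo O hO).mem_nhds hr)] with t h1 h2
      exact ⟨h1, h2⟩
    have hcl : H ⊆ closure {s | s ∈ H ∧ reflect i j s ∈ O} := by
      intro s hs
      have h1 : reflect i j s ∈ closure (O ∩ H) :=
        (hSd O hO).open_subset_closure_inter hHo (pairDisc_reflect hs) |>
          fun h => by rwa [Set.inter_comm]
      have h2 : ContinuousAt (fun q => reverse (reflect i j (reverse q))) (reflect i j s) :=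
        continuous_reverse.continuousAt.comp
          (ContinuousAt.comp (f := reverse) (continuousAt_reflect
            (by rw [pairDisc_reverse]; exact pairDisc_reflect hs)) continuous_reverse.continuousAt)
      have h3 := mem_closure_image h2 h1
      rw [reverse_reflect hs] at h3
      refine closure_mono ?_ h3
      rintro _ ⟨q, ⟨hqO, hqH⟩, rfl⟩
      have hqH' : 0 < pairDisc (reverse q) i j := by rw [pairDisc_reverse]; exact hqH
      refine ⟨?_, ?_⟩
      · rw [hH, Set.mem_ofPred_eq, pairDisc_reverse]
        exact pairDisc_reflect hqH'
      · dsimp only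
        rw [reflect_reverse hqH]
        exact hqO
    filter_upwards [residual_imp_of_subset_closure hDo hcl] with s hs h1
    exact (hs h1).2
  filter_upwards [(eventually_countable_ball hSc).2 key] with s hs h
  exact hSD (Set.mem_sInter.2 fun O hO => hs O hO h)

/-- Line data which remain generic under `n` arbitrary collisions. -/
def GenericUpTo : ℕ → (ι → V) × (ι → V) → Prop
  | 0, s => Generic s
  | n + 1, s => GenericUpTo n s ∧ ∀ i j, 0 < pairDisc s i j → GenericUpTo n (reflect i j s)

lemma genericUpTo_eventually [Nontrivial V] (n : ℕ) :
    ∀ᶠ s in residual ((ι → V) × (ι → V)), GenericUpTo n s := by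
  have := Finite.to_countable (α := ι)
  induction n with
  | zero => exact generic_eventually
  | succ n ih =>
    refine ih.and ?_
    simp only [eventually_countable_forall]
    intro i j
    exact reflect_eventually i j ih

/-- Line data which remain generic under arbitrary collisions. -/
def GenericForever (s : (ι → V) × (ι → V)) : Prop := ∀ n, GenericUpTo n s

lemma GenericForever.generic {s : (ι → V) × (ι → V)} (h : GenericForever s) : Generic s := h 0

lemma GenericForever.reflect {s : (ι → V) × (ι → V)} (h : GenericForever s) {i j : ι}
    (hij : 0 < pairDisc s i j) : GenericForever (reflect i j s) :=
  fun n => (h (n + 1)).2 i j hij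

lemma dense_genericForever [Nontrivial V] [CompleteSpace V] :
    Dense {s : (ι → V) × (ι → V) | GenericForever s} := by
  have := Fintype.ofFinite ι
  exact dense_of_mem_residual (eventually_countable_forall.2 genericUpTo_eventually)

end Generic

/-! ### Collisions do not accumulate -/

section Accumulation

variable {H C : Type*} [NormedAddCommGroup H] [InnerProductSpace ℝ H]

lemma norm_bilin_le {A : C → H →L[ℝ] H} {a : ℝ} (ha : ∀ c, ‖A c‖ ≤ a) (c : C) (x y : H) :
    |⟪A c x, y⟫| ≤ a * ‖x‖ * ‖y‖ :=
  (abs_real_inner_le_norm _ _).trans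
    (mul_le_mul_of_nonneg_right ((A c).le_of_opNorm_le (ha c) x) (norm_nonneg y))

/-- A billiard trajectory, given by its successive reflections, in the complement of finitely many
cylinders has infinite life time. -/
theorem not_bddAbove_collision_times [CompleteSpace H] [Finite C] (A : C → H →L[ℝ] H)
    (hsymm : ∀ c x y, ⟪A c x, y⟫ = ⟪x, A c y⟫) (hpos : ∀ c x, 0 ≤ ⟪A c x, x⟫)
    (c : ℕ → C) (X v : ℕ → H) (τ μ : ℕ → ℝ) (hτ : Monotone τ)
    (hX : ∀ k, X (k + 1) = X k + (τ (k + 1) - τ k) • v k)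
    (hv : ∀ k, v (k + 1) = v k + μ k • A (c k) (X (k + 1))) (hμ : ∀ k, 0 < μ k)
    (h4 : ∀ k, ⟪A (c k) (X (k + 1)), X (k + 1)⟫ = 4)
    (hin : ∀ k, ⟪A (c k) (X (k + 1)), v k⟫ < 0) (hE : ∀ k, ‖v (k + 1)‖ = ‖v k‖) :
    ¬ BddAbove (Set.range τ) := by
  intro hb
  obtain ⟨a, ha0, ha⟩ : ∃ a : ℝ, 0 ≤ a ∧ ∀ c, ‖A c‖ ≤ a := by
    have := Fintype.ofFinite C
    refine ⟨∑ c, ‖A c‖, Finset.sum_nonneg fun _ _ => norm_nonneg _, fun d => ?_⟩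
    exact Finset.single_le_sum (f := fun c => ‖A c‖) (fun _ _ => norm_nonneg _)
      (Finset.mem_univ d)
  set T := ⨆ k, τ k with hT
  have hτT : Tendsto τ atTop (𝓝 T) := tendsto_atTop_ciSup hτ hb
  have hτle : ∀ k, τ k ≤ T := fun k => le_ciSup hb k
  have hτs : ∀ k, 0 ≤ τ (k + 1) - τ k := fun k => sub_nonneg.2 (hτ k.le_succ)
  set R := ‖v 0‖ with hR
  have hR0 : 0 ≤ R := norm_nonneg _
  have hvR : ∀ k, ‖v k‖ = R := by
    intro k
    induction k with
    | zero => rfl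
    | succ k ih => rw [hE, ih]
  set Q := ‖X 0‖ + (T - τ 0) * R with hQ
  have hXQ' : ∀ k, ‖X k‖ ≤ ‖X 0‖ + (τ k - τ 0) * R := by
    intro k
    induction k with
    | zero => simp
    | succ k ih =>
      rw [hX]
      have := norm_add_le (X k) ((τ (k + 1) - τ k) • v k)
      rw [norm_smul, hvR, Real.norm_of_nonneg (hτs k)] at this
      linarith
  have hXQ : ∀ k, ‖X k‖ ≤ Q := fun k => (hXQ' k).trans (by
    have := mul_le_mul_of_nonneg_right (sub_le_sub_right (hτle k) (τ 0)) hR0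
    linarith)
  have hQ0 : 0 ≤ Q := (norm_nonneg _).trans (hXQ 0)
  have h4' : ∀ k, ⟪X (k + 1), A (c k) (X (k + 1))⟫ = 4 := fun k => by rw [← hsymm, h4]
  -- the total impulse is finite
  have hsum : Summable μ := by
    refine summable_of_sum_range_le (c := (Q * R + Q * R) / 4) (fun k => (hμ k).le) fun n => ?_
    have h1 : ∀ n, 4 * ∑ k ∈ Finset.range n, μ k ≤ ⟪X n, v n⟫ - ⟪X 0, v 0⟫ := by
      intro n
      induction n with
      | zero => simp
      | succ n ih =>
        rw [Finset.sum_range_succ, hv, inner_add_right, real_inner_smul_right, h4', hX,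
          inner_add_left, real_inner_smul_left, real_inner_self_eq_norm_sq]
        have := mul_nonneg (hτs n) (sq_nonneg ‖v n‖)
        linarith
    have h2 : ∀ n, |⟪X n, v n⟫| ≤ Q * R := fun n =>
      (abs_real_inner_le_norm _ _).trans (by
        rw [hvR]; exact mul_le_mul_of_nonneg_right (hXQ n) hR0)
    have := h1 n
    have := abs_le.1 (h2 n)
    have := abs_le.1 (h2 0)
    linarith
  obtain ⟨v', hv'⟩ : ∃ v', Tendsto v atTop (𝓝 v') := by
    refine cauchySeq_tendsto_of_complete (cauchySeq_of_summable_dist ?_)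
    refine Summable.of_nonneg_of_le (fun _ => dist_nonneg) (fun k => ?_) (hsum.mul_right (a * Q))
    rw [dist_comm, dist_eq_norm, hv, add_sub_cancel_left, norm_smul, Real.norm_of_nonneg (hμ k).le]
    refine mul_le_mul_of_nonneg_left ?_ (hμ k).le
    exact ((A (c k)).le_of_opNorm_le (ha _) _).trans (mul_le_mul_of_nonneg_left (hXQ _) ha0)
  obtain ⟨x', hx'⟩ : ∃ x', Tendsto X atTop (𝓝 x') := by
    refine cauchySeq_tendsto_of_complete (cauchySeq_of_summable_dist ?_)
    have hs : Summable fun k => τ (k + 1) - τ k := by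
      refine summable_of_sum_range_le (c := T - τ 0) hτs fun n => ?_
      rw [Finset.sum_range_sub]
      linarith [hτle n]
    refine Summable.of_nonneg_of_le (fun _ => dist_nonneg) (fun k => ?_) (hs.mul_right R)
    rw [dist_comm, dist_eq_norm, hX, add_sub_cancel_left, norm_smul,
      Real.norm_of_nonneg (hτs k), hvR]
  have hv'R : ‖v'‖ = R := by
    refine tendsto_nhds_unique hv'.norm ?_
    simp only [hvR]
    exact tendsto_const_nhds
  -- late collisions are of kinds which occur infinitely often
  have hlate : ∀ᶠ k in atTop, ⟪A (c k) x', v'⟫ ≤ 0 := by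
    have h1 : ∀ d, ∀ᶠ k in atTop, c k = d → ⟪A d x', v'⟫ ≤ 0 := by
      intro d
      by_cases hd : ∃ᶠ k in atTop, c k = d
      · refine Eventually.of_forall fun _ _ => ?_
        have hl : Tendsto (fun k => ⟪A d (X (k + 1)), v k⟫) atTop (𝓝 ⟪A d x', v'⟫) :=
          (((A d).continuous.tendsto x').comp (hx'.comp (tendsto_add_atTop_nat 1))).inner hv'
        by_contra! hcon
        obtain ⟨k, hk1, hk2⟩ := (hd.and_eventually (hl.eventually (lt_mem_nhds hcon))).exists
        have := hin k
        rw [hk1] at this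
        linarith
      · rw [not_frequently] at hd
        filter_upwards [hd] with k hk h
        exact absurd h hk
    filter_upwards [eventually_all.2 h1] with k hk
    exact hk _ rfl
  set z : ℕ → H := fun k => X k - x' + (T - τ k) • v' with hz
  have hz0 : Tendsto (fun k => ‖z k‖) atTop (𝓝 0) := by
    have : Tendsto z atTop (𝓝 (x' - x' + (T - T) • v')) :=
      (hx'.sub_const x').add ((tendsto_const_nhds.sub hτT).smul_const v')
    simpa using this.norm
  have hzs : ∀ k, z (k + 1) = z k + (τ (k + 1) - τ k) • (v k - v') := by
    intro k
    simp only [hz, hX]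
    module
  set C₁ := 2 * Q + (T - τ 0) * R with hC₁
  have hC₁0 : 0 ≤ C₁ := by
    have := mul_nonneg (sub_nonneg.2 (hτle 0)) hR0
    linarith
  obtain ⟨k₀, hk₀, hsmall⟩ : ∃ k₀, (∀ k ≥ k₀, ⟪A (c k) x', v'⟫ ≤ 0) ∧
      2 * a * R * (T - τ k₀) * C₁ ≤ 1 := by
    obtain ⟨k₁, hk₁⟩ := eventually_atTop.1 hlate
    have h1 : Tendsto (fun k => 2 * a * R * (T - τ k) * C₁) atTop
        (𝓝 (2 * a * R * (T - T) * C₁)) :=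
      ((tendsto_const_nhds.sub hτT).const_mul _).mul_const _
    rw [sub_self, mul_zero, zero_mul] at h1
    obtain ⟨k, hk, hk'⟩ := ((h1.eventually (ge_mem_nhds zero_lt_one)).and
      (eventually_ge_atTop k₁)).exists
    exact ⟨k, fun m hm => hk₁ m (hk'.trans hm), hk⟩
  have hhalf : ∀ B, 0 ≤ B → (∀ m ≥ k₀, ‖v m - v'‖ ≤ B) → ∀ m ≥ k₀, ‖v m - v'‖ ≤ B / 2 := by
    intro B hB0 hB m hm
    have hzB : ∀ m ≥ k₀, ‖z m‖ ≤ (T - τ k₀) * B := by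
      intro m hm
      have h1 : ∀ n, ‖z m‖ ≤ ‖z (m + n)‖ + (τ (m + n) - τ m) * B := by
        intro n
        induction n with
        | zero => simp
        | succ n ih =>
          have h2 : ‖z (m + n)‖ ≤ ‖z (m + n + 1)‖ + (τ (m + n + 1) - τ (m + n)) * B := by
            have h3 : z (m + n) =
                z (m + n + 1) - (τ (m + n + 1) - τ (m + n)) • (v (m + n) - v') := by
              rw [hzs]; abel
            have h4 := norm_sub_le (z (m + n + 1))
              ((τ (m + n + 1) - τ (m + n)) • (v (m + n) - v'))
            rw [← h3, norm_smul, Real.norm_of_nonneg (hτs _)] at h4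
            have h5 := mul_le_mul_of_nonneg_left (hB (m + n) (by omega)) (hτs (m + n))
            linarith
          rw [← add_assoc]
          linarith
      refine ge_of_tendsto' (x := atTop)
        (f := fun n => ‖z (m + n)‖ + (T - τ k₀) * B) ?_ fun n => (h1 n).trans ?_
      · have h5 := (hz0.comp (tendsto_add_atTop_nat m)).add_const ((T - τ k₀) * B)
        rw [zero_add] at h5
        simpa [Function.comp_def, add_comm m] using h5
      · have h6 : τ (m + n) - τ m ≤ T - τ k₀ := sub_le_sub (hτle _) (hτ hm)
        have h7 := mul_le_mul_of_nonneg_right h6 hB0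
        linarith
    have hμB : ∀ n, 4 * ∑ l ∈ Finset.range n, μ (m + l) ≤ C₁ * B := by
      intro n
      have h1 : ∀ n, 4 * ∑ l ∈ Finset.range n, μ (m + l) ≤
          ⟪X (m + n), v (m + n) - v'⟫ - ⟪X m, v m - v'⟫ + (τ (m + n) - τ m) * (R * B) := by
        intro n
        induction n with
        | zero => simp
        | succ n ih =>
          have h2 : ⟪X (m + n + 1), v (m + n + 1) - v'⟫ = ⟪X (m + n), v (m + n) - v'⟫ +
              (τ (m + n + 1) - τ (m + n)) * ⟪v (m + n), v (m + n) - v'⟫ + 4 * μ (m + n) := by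
            rw [hv, add_sub_right_comm, inner_add_right, real_inner_smul_right, h4', hX,
              inner_add_left, real_inner_smul_left]
            ring
          have h3 : -(R * B) ≤ ⟪v (m + n), v (m + n) - v'⟫ := by
            refine (abs_le.1 ((abs_real_inner_le_norm _ _).trans ?_)).1
            rw [hvR]
            exact mul_le_mul_of_nonneg_left (hB _ (by omega)) hR0
          have h4 := mul_le_mul_of_nonneg_left h3 (hτs (m + n))
          rw [Finset.sum_range_succ, ← add_assoc, h2]
          linarith
      have h2 : ∀ k ≥ k₀, |⟪X k, v k - v'⟫| ≤ Q * B := fun k hk =>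
        (abs_real_inner_le_norm _ _).trans
          (mul_le_mul (hXQ k) (hB k hk) (norm_nonneg _) hQ0)
      have h3 := abs_le.1 (h2 m hm)
      have h4 := abs_le.1 (h2 (m + n) (by omega))
      have h5 : τ (m + n) - τ m ≤ T - τ 0 := sub_le_sub (hτle _) (hτ m.zero_le)
      have h6 := mul_le_mul_of_nonneg_right h5 (mul_nonneg hR0 hB0)
      have := h1 n
      rw [hC₁]
      linarith
    have hKn : ∀ n, ‖v m - v'‖ ^ 2 ≤ ‖v (m + n) - v'‖ ^ 2 +
        2 * a * R * ((T - τ k₀) * B) * ∑ l ∈ Finset.range n, μ (m + l) := by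
      intro n
      induction n with
      | zero => simp
      | succ n ih =>
        have hk : m + n ≥ k₀ := by omega
        have h1 : ‖v (m + n + 1) - v'‖ ^ 2 = ‖v (m + n) - v'‖ ^ 2 -
            2 * (μ (m + n) * ⟪A (c (m + n)) (X (m + n + 1)), v'⟫) := by
          rw [norm_sub_sq_real, norm_sub_sq_real, hvR, hvR]
          nth_rw 1 [hv]
          rw [inner_add_left, real_inner_smul_left]
          ring
        have h2 : ⟪A (c (m + n)) (X (m + n + 1)), v'⟫ ≤ a * ((T - τ k₀) * B) * R := by
          have h3 : X (m + n + 1) = z (m + n + 1) + x' - (T - τ (m + n + 1)) • v' := by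
            simp only [hz]
            abel
          have h4 := (abs_le.1 (norm_bilin_le ha (c (m + n)) (z (m + n + 1)) v')).2
          have h5 : a * ‖z (m + n + 1)‖ * ‖v'‖ ≤ a * ((T - τ k₀) * B) * R := by
            rw [hv'R]
            exact mul_le_mul_of_nonneg_right
              (mul_le_mul_of_nonneg_left (hzB _ (by omega)) ha0) hR0
          have h6 := mul_nonneg (sub_nonneg.2 (hτle (m + n + 1))) (hpos (c (m + n)) v')
          rw [h3, map_sub, map_add, map_smul, inner_sub_left, inner_add_left,
            real_inner_smul_left]
          linarith [hk₀ _ hk]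
        have h3 := mul_le_mul_of_nonneg_left h2 (hμ (m + n)).le
        rw [Finset.sum_range_succ, ← add_assoc, h1]
        linarith
    have hK : ‖v m - v'‖ ^ 2 ≤ B ^ 2 / 4 := by
      refine ge_of_tendsto' (x := atTop) (f := fun n => ‖v (m + n) - v'‖ ^ 2 + B ^ 2 / 4) ?_
        fun n => (hKn n).trans ?_
      · have h1 : Tendsto (fun n => ‖v n - v'‖ ^ 2) atTop (𝓝 0) := by
          have := (hv'.sub_const v').norm.pow 2
          simpa using this
        have h5 := (h1.comp (tendsto_add_atTop_nat m)).add_const (B ^ 2 / 4)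
        rw [zero_add] at h5
        simpa [Function.comp_def, add_comm m] using h5
      · have h1 : 0 ≤ 2 * a * R * ((T - τ k₀) * B) := by
          have := sub_nonneg.2 (hτle k₀)
          positivity
        have h2 := mul_le_mul_of_nonneg_left (hμB n) h1
        have h3 := mul_le_mul_of_nonneg_right hsmall (sq_nonneg B)
        nlinarith
    exact abs_le_of_sq_le_sq' (by linarith [hK, div_pow B 2 2] : ‖v m - v'‖ ^ 2 ≤ (B / 2) ^ 2)
      (by linarith) |>.2
  have hpow : ∀ n : ℕ, ∀ m ≥ k₀, ‖v m - v'‖ ≤ 2 * R * (1 / 2) ^ n := by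
    intro n
    induction n with
    | zero =>
      intro m _
      have := norm_sub_le (v m) v'
      rw [hvR, hv'R] at this
      linarith
    | succ n ih =>
      intro m hm
      have := hhalf _ (by positivity) ih m hm
      rw [pow_succ]
      linarith
  have hconst : ∀ m ≥ k₀, v m = v' := by
    intro m hm
    have h1 : Tendsto (fun n : ℕ => 2 * R * (1 / 2 : ℝ) ^ n) atTop (𝓝 (2 * R * 0)) :=
      (tendsto_pow_atTop_nhds_zero_of_lt_one (by norm_num) (by norm_num)).const_mul _
    rw [mul_zero] at h1
    have h2 : ‖v m - v'‖ ≤ 0 := ge_of_tendsto' h1 fun n => hpow n m hm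
    exact sub_eq_zero.1 (norm_eq_zero.1 (le_antisymm h2 (norm_nonneg _)))
  have h1 := hv k₀
  rw [hconst k₀ le_rfl, hconst (k₀ + 1) (by omega)] at h1
  have h2 : μ k₀ • A (c k₀) (X (k₀ + 1)) = 0 := by simpa using h1
  have h3 := congrArg (fun w => ⟪w, X (k₀ + 1)⟫) h2
  simp only [real_inner_smul_left, h4, inner_zero_left] at h3
  linarith [hμ k₀]

end Accumulation

/-! ### The dynamics -/

section Dynamics

variable {ι V : Type*} [DecidableEq ι] [NormedAddCommGroup V] [InnerProductSpace ℝ V]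

/-- Line data which can be followed for a short time after time `τ`. -/
def Admissible (τ : ℝ) (s : (ι → V) × (ι → V)) : Prop :=
  ∀ i j, i ≠ j → 2 ≤ ‖relPos s i j τ‖ ∧
    (‖relPos s i j τ‖ = 2 → 0 < ⟪relPos s i j τ, relVel s i j⟫)

/-- Line data `s` are followed from time `τ` to the collision of balls `i` and `j` at time `τ'`,
and `s'` is the line data after this collision. -/
def CollisionStep (i j : ι) (τ : ℝ) (s : (ι → V) × (ι → V)) (τ' : ℝ)
    (s' : (ι → V) × (ι → V)) : Prop :=
  τ < τ' ∧ IsEntry s i j τ' ∧ s' = reflect i j s ∧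
    (∀ k l, k ≠ l → ∀ t ∈ Set.Icc τ τ', 2 ≤ ‖relPos s k l t‖) ∧
    ∀ k l, k ≠ l → ‖relPos s k l τ'‖ = 2 → k = i ∧ l = j ∨ k = j ∧ l = i

/-- Line data `s` can be followed forever after time `τ`. -/
def FreeStep (τ : ℝ) (s : (ι → V) × (ι → V)) (τ' : ℝ) (s' : (ι → V) × (ι → V)) : Prop :=
  τ' = max τ 0 + 1 ∧ s' = s ∧ ∀ k l, k ≠ l → ∀ t, τ ≤ t → 2 ≤ ‖relPos s k l t‖

/-- Balls overlap right after running into each other. -/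
lemma IsEntry.overlap {s : (ι → V) × (ι → V)} {i j : ι} {t η : ℝ} (h : IsEntry s i j t)
    (hη : 0 < η) : ∃ r ∈ Set.Ioo t (t + η), ‖relPos s i j r‖ < 2 := by
  have hn : 0 < -⟪relPos s i j t, relVel s i j⟫ := by linarith [h.2]
  set a := -⟪relPos s i j t, relVel s i j⟫ with ha
  set b := ‖relVel s i j‖ ^ 2 with hb
  have hb0 : 0 ≤ b := by positivity
  set r := min (η / 2) (a / (b + 1)) with hr
  have hr0 : 0 < r := by positivity
  have hrη : r < η := (min_le_left _ _).trans_lt (by linarith)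
  have hrb : r * (b + 1) ≤ a := (le_div_iff₀ (by positivity)).1 (min_le_right _ _)
  refine ⟨t + r, ⟨by linarith, by linarith⟩, ?_⟩
  have h1 : ‖relPos s i j (t + r)‖ ^ 2 = ‖relPos s i j t‖ ^ 2 +
      2 * (t + r - t) * ⟪relPos s i j t, relVel s i j⟫ + (t + r - t) ^ 2 * b :=
    norm_sq_line_shift (s.1 i - s.1 j) (s.2 i - s.2 j) t (t + r)
  rw [h.1] at h1
  have h2 : r * (r * (b + 1)) ≤ r * a := mul_le_mul_of_nonneg_left hrb hr0.le
  nlinarith [norm_nonneg (relPos s i j (t + r)), mul_pos hr0 hn, mul_pos hr0 hr0]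

lemma inner_relPos_shift (s : (ι → V) × (ι → V)) (i j : ι) (t r : ℝ) :
    ⟪relPos s i j r, relVel s i j⟫ =
      ⟪relPos s i j t, relVel s i j⟫ + (r - t) * ‖relVel s i j‖ ^ 2 := by
  have h1 : ∀ t, ⟪relPos s i j t, relVel s i j⟫ =
      ⟪s.1 i - s.1 j, relVel s i j⟫ + t * ‖relVel s i j‖ ^ 2 :=
    inner_line (s.1 i - s.1 j) (s.2 i - s.2 j)
  rw [h1, h1 t]
  ring

/-- Colliding balls do not meet again right after their collision. -/
lemma not_isEntry_reflect {s : (ι → V) × (ι → V)} {i j : ι} {t r : ℝ} (h : IsEntry s i j t)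
    (hr : t ≤ r) : ¬ IsEntry (reflect i j s) i j r := by
  intro h'
  have h1 := inner_relVel_reflect h.pairDisc_pos
  have h2 := h'.2
  rw [inner_relPos_shift _ _ _ t, ← h.pairTime_eq, relPos_reflect, h1, h.pairTime_eq] at h2
  have := h.2
  have : 0 ≤ (r - t) * ‖relVel (reflect i j s) i j‖ ^ 2 :=
    mul_nonneg (by linarith) (by positivity)
  linarith

lemma exists_isEntry {s : (ι → V) × (ι → V)} {τ t : ℝ} (hs : Admissible τ s) {i j : ι}
    (hij : i ≠ j) (hτ : τ ≤ t) (h : ‖relPos s i j t‖ < 2) :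
    ∃ r, τ < r ∧ r < t ∧ IsEntry s i j r := by
  obtain ⟨h1, h2, h3⟩ := exists_entry hτ (hs i j hij).1 (hs i j hij).2 h
  exact ⟨_, h2, h3, isEntry_pairTime h1⟩

lemma CollisionStep.admissible {s s' : (ι → V) × (ι → V)} {τ τ' : ℝ} {i j : ι}
    (h : CollisionStep i j τ s τ' s') : Admissible τ' s' := by
  obtain ⟨h1, h2, rfl, h4, h5⟩ := h
  intro k l hkl
  have h6 := inner_relVel_reflect h2.pairDisc_pos
  have h7 := relPos_reflect i j k l s
  rw [h2.pairTime_eq] at h6 h7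
  rw [h7]
  refine ⟨h4 k l hkl τ' ⟨h1.le, le_rfl⟩, fun h8 => ?_⟩
  rcases h5 k l hkl h8 with ⟨rfl, rfl⟩ | ⟨rfl, rfl⟩
  · rw [h6]
    linarith [h2.2]
  · rw [relPos_swap s l k, relVel_swap _ l k, inner_neg_neg, h6]
    linarith [h2.2]

lemma FreeStep.lt {s s' : (ι → V) × (ι → V)} {τ τ' : ℝ} (h : FreeStep τ s τ' s') : τ < τ' := by
  rw [h.1]
  linarith [le_max_left τ 0]

lemma FreeStep.admissible {s s' : (ι → V) × (ι → V)} {τ τ' : ℝ}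
    (h : FreeStep τ s τ' s') (hg : ∀ i j, i ≠ j → pairDisc s i j ≠ 0) : Admissible τ' s' := by
  have hlt := h.lt
  obtain ⟨h1, rfl, h2⟩ := h
  intro i j hij
  refine ⟨h2 i j hij _ hlt.le, fun h3 => ?_⟩
  exfalso
  have h4 : IsEntry s' i j τ' :=
    ⟨h3, inner_neg_of_contact hlt (fun r hr => h2 i j hij r hr.1) h3 (hg i j hij)⟩
  obtain ⟨r, hr, hr2⟩ := h4.overlap one_pos
  linarith [h2 i j hij r (by linarith [hr.1])]

lemma FreeStep.not_isEntry {s s' : (ι → V) × (ι → V)} {τ τ' r : ℝ} {i j : ι}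
    (h : FreeStep τ s τ' s') (hr : τ ≤ r) : ¬ IsEntry s i j r := by
  intro h4
  obtain ⟨q, hq, hq2⟩ := h4.overlap one_pos
  linarith [h.2.2 i j h4.ne q (by linarith [hq.1])]

lemma CollisionStep.not_isEntry {s s' : (ι → V) × (ι → V)} {τ τ' r : ℝ} {i j k l : ι}
    (h : CollisionStep i j τ s τ' s') (hr : τ ≤ r) (hr' : r < τ') : ¬ IsEntry s k l r := by
  intro h4
  obtain ⟨q, hq, hq2⟩ := h4.overlap (sub_pos.2 hr')
  linarith [h.2.2.2.1 k l h4.ne q ⟨by linarith [hq.1], by linarith [hq.2]⟩]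

lemma exists_step [Finite ι] {s : (ι → V) × (ι → V)} {τ : ℝ} (hs : Admissible τ s)
    (hg : Generic s) :
    (∃ i j τ', CollisionStep i j τ s τ' (reflect i j s)) ∨ FreeStep τ s (max τ 0 + 1) s := by
  set E : Set (ι × ι) :=
    {c | c.1 ≠ c.2 ∧ 0 < pairDisc s c.1 c.2 ∧ τ < pairTime s c.1 c.2} with hE
  have hmem : ∀ k l r, k ≠ l → τ < r → IsEntry s k l r → (k, l) ∈ E ∧ pairTime s k l = r := by
    intro k l r hkl hr h
    exact ⟨⟨hkl, h.pairDisc_pos, by simpa only [h.pairTime_eq] using hr⟩, h.pairTime_eq⟩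
  rcases E.eq_empty_or_nonempty with h | h
  · refine Or.inr ⟨rfl, rfl, fun k l hkl t ht => ?_⟩
    by_contra! hcon
    obtain ⟨r, hr, -, he⟩ := exists_isEntry hs hkl ht hcon
    have := (hmem k l r hkl hr he).1
    rw [h] at this
    exact this
  · left
    obtain ⟨⟨i, j⟩, ⟨hij, hd, hτ⟩, hmin⟩ :=
      Set.exists_min_image E (fun c => pairTime s c.1 c.2) E.toFinite h
    simp only at hij hd hτ hmin
    have hge : ∀ k l, k ≠ l → ∀ t ∈ Set.Icc τ (pairTime s i j), 2 ≤ ‖relPos s k l t‖ := by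
      intro k l hkl t ht
      by_contra! hcon
      obtain ⟨r, hr, hrt, he⟩ := exists_isEntry hs hkl ht.1 hcon
      obtain ⟨h1, h2⟩ := hmem k l r hkl hr he
      have := hmin _ h1
      simp only [h2] at this
      linarith [ht.2]
    refine ⟨i, j, pairTime s i j, hτ, isEntry_pairTime hd, rfl, hge, ?_⟩
    intro k l hkl h2
    have h3 : IsEntry s k l (pairTime s i j) :=
      ⟨h2, inner_neg_of_contact hτ (fun r hr => hge k l hkl r hr) h2 (hg.1 k l hkl)⟩
    have h4 := h3.pairTime_eq
    have hk : k = i ∨ k = j := by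
      by_contra! hcon
      exact hg.2 i j k l hkl hcon.1 hcon.2 hd h3.pairDisc_pos h4.symm
    have hl : l = i ∨ l = j := by
      by_contra! hcon
      refine hg.2 i j l k hkl.symm hcon.1 hcon.2 hd h3.symm.pairDisc_pos ?_
      rw [pairTime_swap s k l, h4]
    grind

/-- An infinite sequence of collisions or free flights. -/
structure IsFlow (τ : ℕ → ℝ) (s : ℕ → (ι → V) × (ι → V)) : Prop where
  step : ∀ n, (∃ i j, CollisionStep i j (τ n) (s n) (τ (n + 1)) (s (n + 1))) ∨
    FreeStep (τ n) (s n) (τ (n + 1)) (s (n + 1))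
  admissible : ∀ n, Admissible (τ n) (s n)

lemma exists_isFlow [Finite ι] {s₀ : (ι → V) × (ι → V)} {τ₀ : ℝ} (hs : Admissible τ₀ s₀)
    (hg : GenericForever s₀) :
    ∃ (τ : ℕ → ℝ) (s : ℕ → (ι → V) × (ι → V)), τ 0 = τ₀ ∧ s 0 = s₀ ∧ IsFlow τ s := by
  let X := {q : ℝ × ((ι → V) × (ι → V)) // Admissible q.1 q.2 ∧ GenericForever q.2}
  have h : ∀ q : X, ∃ q' : X,
      (∃ i j, CollisionStep i j q.1.1 q.1.2 q'.1.1 q'.1.2) ∨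
        FreeStep q.1.1 q.1.2 q'.1.1 q'.1.2 := by
    rintro ⟨⟨τ, s⟩, h1, h2⟩
    rcases exists_step h1 h2.generic with ⟨i, j, τ', h3⟩ | h3
    · exact ⟨⟨(τ', reflect i j s), h3.admissible, h2.reflect h3.2.1.pairDisc_pos⟩,
        Or.inl ⟨i, j, h3⟩⟩
    · exact ⟨⟨(max τ 0 + 1, s), h3.admissible h2.generic.1, h2⟩, Or.inr h3⟩
  choose f hf using h
  let q : ℕ → X := fun n => Nat.rec ⟨(τ₀, s₀), hs, hg⟩ (fun _ q => f q) n
  exact ⟨fun n => (q n).1.1, fun n => (q n).1.2, rfl, rfl, fun n => hf (q n), fun n => (q n).2.1⟩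

namespace IsFlow

variable {τ : ℕ → ℝ} {s : ℕ → (ι → V) × (ι → V)}

lemma lt_succ (h : IsFlow τ s) (n : ℕ) : τ n < τ (n + 1) := by
  rcases h.step n with ⟨i, j, h1⟩ | h1
  · exact h1.1
  · exact h1.lt

lemma strictMono (h : IsFlow τ s) : StrictMono τ := strictMono_nat_of_lt_succ h.lt_succ

lemma pos_succ (h : IsFlow τ s) (n : ℕ) (k : ι) :
    (s (n + 1)).1 k + τ (n + 1) • (s (n + 1)).2 k = (s n).1 k + τ (n + 1) • (s n).2 k := by
  rcases h.step n with ⟨i, j, h1⟩ | h1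
  · rw [h1.2.2.1, ← h1.2.1.pairTime_eq, reflect_pos]
  · rw [h1.2.1]

lemma dist_ge (h : IsFlow τ s) (n : ℕ) {k l : ι} (hkl : k ≠ l) {t : ℝ}
    (ht : t ∈ Set.Icc (τ n) (τ (n + 1))) : 2 ≤ ‖relPos (s n) k l t‖ := by
  rcases h.step n with ⟨i, j, h1⟩ | h1
  · exact h1.2.2.2.1 k l hkl t ht
  · exact h1.2.2 k l hkl t ht.1

end IsFlow

end Dynamics

/-! ### Collision times do not accumulate -/

section Accumulation

variable {ι V : Type*} [DecidableEq ι] [Fintype ι] [NormedAddCommGroup V]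
  [InnerProductSpace ℝ V]

/-- The difference of two entries of a family of vectors. -/
noncomputable def diffMap (V : Type*) [NormedAddCommGroup V] [InnerProductSpace ℝ V] (i j : ι) :
    PiLp 2 (fun _ : ι => V) →L[ℝ] V :=
  PiLp.proj (𝕜 := ℝ) 2 (fun _ : ι => V) i - PiLp.proj (𝕜 := ℝ) 2 (fun _ : ι => V) j

lemma diffMap_apply (i j : ι) (x : PiLp 2 (fun _ : ι => V)) : diffMap V i j x = x i - x j := rfl

lemma inner_dipole (i j : ι) (u : V) (y : PiLp 2 (fun _ : ι => V)) :
    ⟪WithLp.toLp 2 (dipole i j u), y⟫ = ⟪u, y i - y j⟫ := by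
  simp only [PiLp.inner_apply, dipole, Pi.sub_apply, inner_sub_left, Finset.sum_sub_distrib,
    inner_sub_right]
  congr 1
  · rw [Finset.sum_eq_single i]
    · simp
    · intro k _ hk
      simp [hk]
    · simp
  · rw [Finset.sum_eq_single j]
    · simp
    · intro k _ hk
      simp [hk]
    · simp

lemma adjoint_diffMap [CompleteSpace V] (i j : ι) (u : V) :
    (diffMap V i j).adjoint u = WithLp.toLp 2 (dipole i j u) := by
  refine ext_inner_right ℝ fun y => ?_
  rw [ContinuousLinearMap.adjoint_inner_left, diffMap_apply, inner_dipole]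

lemma reflect_snd {s : (ι → V) × (ι → V)} {i j : ι} {t : ℝ} (h : IsEntry s i j t) :
    WithLp.toLp 2 (reflect i j s).2 = WithLp.toLp 2 s.2 +
      (-⟪relPos s i j t, relVel s i j⟫ / 4) • WithLp.toLp 2 (dipole i j (relPos s i j t)) := by
  rw [← WithLp.toLp_smul, ← WithLp.toLp_add, reflect, kick, impulse, h.pairTime_eq]
  congr 2
  have : dipole i j ((2⁻¹ : ℝ) • relPos s i j t) = (2⁻¹ : ℝ) • dipole i j (relPos s i j t) := by
    simp only [dipole, ← Pi.single_smul, smul_sub]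
  rw [this, real_inner_smul_left]
  module

/-- Conservation of energy. -/
lemma norm_reflect_snd {s : (ι → V) × (ι → V)} {i j : ι} {t : ℝ} (h : IsEntry s i j t) :
    ‖WithLp.toLp 2 (reflect i j s).2‖ = ‖WithLp.toLp 2 s.2‖ := by
  rw [reflect_snd h]
  refine (sq_eq_sq₀ (norm_nonneg _) (norm_nonneg _)).1 ?_
  have h1 : ‖WithLp.toLp 2 (dipole i j (relPos s i j t))‖ ^ 2 = 8 := by
    rw [← real_inner_self_eq_norm_sq, inner_dipole, PiLp.toLp_apply, PiLp.toLp_apply,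
      dipole_left h.ne, dipole_right h.ne, inner_sub_right, inner_neg_right,
      real_inner_self_eq_norm_sq, h.1]
    norm_num
  have h2 : ⟪WithLp.toLp 2 s.2, WithLp.toLp 2 (dipole i j (relPos s i j t))⟫ =
      ⟪relPos s i j t, relVel s i j⟫ := by
    rw [real_inner_comm, inner_dipole]
    rfl
  rw [norm_add_sq_real, real_inner_smul_right, norm_smul, mul_pow, h1, h2, Real.norm_eq_abs,
    sq_abs]
  ring

namespace IsFlow

variable {τ : ℕ → ℝ} {s : ℕ → (ι → V) × (ι → V)}

lemma not_bddAbove_of_collisionStep [CompleteSpace V] (c : ℕ → ι × ι)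
    (h : ∀ n, CollisionStep (c n).1 (c n).2 (τ n) (s n) (τ (n + 1)) (s (n + 1))) :
    ¬ BddAbove (Set.range τ) := by
  set X : ℕ → PiLp 2 (fun _ : ι => V) := fun n => WithLp.toLp 2 ((s n).1 + τ n • (s n).2) with hX
  have hpos : ∀ n, X (n + 1) = WithLp.toLp 2 ((s n).1 + τ (n + 1) • (s n).2) := by
    intro n
    refine congrArg (WithLp.toLp 2) (funext fun k => ?_)
    have := reflect_pos (c n).1 (c n).2 k (s n)
    rw [(h n).2.1.pairTime_eq, ← (h n).2.2.1] at this
    exact this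
  have hrel : ∀ n, diffMap V (c n).1 (c n).2 (X (n + 1)) =
      relPos (s n) (c n).1 (c n).2 (τ (n + 1)) := by
    intro n
    rw [hpos, diffMap_apply, relPos_eq]
    rfl
  refine not_bddAbove_collision_times
    (fun q : ι × ι => (diffMap V q.1 q.2).adjoint ∘L diffMap V q.1 q.2) ?_ ?_ c X
    (fun n => WithLp.toLp 2 (s n).2) τ
    (fun n => -⟪relPos (s n) (c n).1 (c n).2 (τ (n + 1)), relVel (s n) (c n).1 (c n).2⟫ / 4)
    (monotone_nat_of_le_succ fun n => (h n).1.le) ?_ ?_ ?_ ?_ ?_ ?_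
  · intro q x y
    simp only [ContinuousLinearMap.comp_apply, ContinuousLinearMap.adjoint_inner_left,
      ContinuousLinearMap.adjoint_inner_right]
  · intro q x
    simp only [ContinuousLinearMap.comp_apply, ContinuousLinearMap.adjoint_inner_left]
    exact real_inner_self_nonneg
  · intro n
    rw [hpos, hX]
    simp only [WithLp.toLp_add, WithLp.toLp_smul]
    module
  · intro n
    simp only [ContinuousLinearMap.comp_apply, hrel, adjoint_diffMap]
    rw [(h n).2.2.1, reflect_snd (h n).2.1]
  · intro n
    have := (h n).2.1.2
    linarith
  · intro n
    simp only [ContinuousLinearMap.comp_apply, ContinuousLinearMap.adjoint_inner_left, hrel]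
    rw [real_inner_self_eq_norm_sq, (h n).2.1.1]
    norm_num
  · intro n
    simp only [ContinuousLinearMap.comp_apply, ContinuousLinearMap.adjoint_inner_left, hrel]
    exact (h n).2.1.2
  · intro n
    simp only
    rw [(h n).2.2.1, norm_reflect_snd (h n).2.1]

lemma not_bddAbove [CompleteSpace V] (h : IsFlow τ s) : ¬ BddAbove (Set.range τ) := by
  by_cases hf : ∃ n, FreeStep (τ n) (s n) (τ (n + 1)) (s (n + 1))
  · obtain ⟨n, hn⟩ := hf
    have key : ∀ m, s (n + m) = s n ∧ τ n + m ≤ τ (n + m) := by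
      intro m
      induction m with
      | zero => simp
      | succ m ih =>
        have hτ : τ n ≤ τ (n + m) := h.strictMono.monotone (by omega)
        rcases h.step (n + m) with ⟨i, j, h1⟩ | h1
        · exfalso
          have h2 := h1.2.1
          rw [ih.1] at h2
          exact hn.not_isEntry (hτ.trans h1.1.le) h2
        · rw [← add_assoc, h1.2.1, h1.1]
          refine ⟨ih.1, ?_⟩
          push_cast
          linarith [ih.2, le_max_left (τ (n + m)) 0]
    rintro ⟨b, hb⟩
    obtain ⟨m, hm⟩ := exists_nat_gt (b - τ n)
    linarith [hb (Set.mem_range_self (n + m)), (key m).2]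
  · have h1 : ∀ n, ∃ q : ι × ι, CollisionStep q.1 q.2 (τ n) (s n) (τ (n + 1)) (s (n + 1)) := by
      intro n
      rcases h.step n with ⟨i, j, h1⟩ | h1
      · exact ⟨(i, j), h1⟩
      · exact absurd ⟨n, h1⟩ hf
    choose c hc using h1
    exact not_bddAbove_of_collisionStep c hc

lemma exists_lt [CompleteSpace V] (h : IsFlow τ s) (t : ℝ) : ∃ n, t < τ (n + 1) := by
  by_contra! hcon
  refine h.not_bddAbove ⟨t, ?_⟩
  rintro _ ⟨n, rfl⟩
  exact (h.lt_succ n).le.trans (hcon n)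

end IsFlow

end Accumulation

/-! ### Stable sequences of collisions -/

section Robust

variable {ι V : Type*} [DecidableEq ι] [NormedAddCommGroup V] [InnerProductSpace ℝ V]

/-- `k` and `l` are two different balls which are not just `i` and `j`. -/
def OtherPair (i j k l : ι) : Prop := k ≠ l ∧ ¬ (k = i ∧ l = j ∨ k = j ∧ l = i)

/-- From time `r` up to time `0` line data evolve through `n` well separated collisions, which
lead to line data in `Q`. -/
def Robust (Q : Set ((ι → V) × (ι → V))) : ℕ → ℝ → (ι → V) × (ι → V) → Prop
  | 0, r, s => s ∈ Q ∧ ∀ k l, k ≠ l → ∀ t ∈ Set.Icc r 0, 2 < ‖relPos s k l t‖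
  | n + 1, r, s => ∃ i j r₁ r₂, 0 < pairDisc s i j ∧ r ≤ r₁ ∧ r₁ < pairTime s i j ∧
      pairTime s i j < r₂ ∧ r₂ < 0 ∧
      (∀ k l, OtherPair i j k l → ∀ t ∈ Set.Icc r r₂, 2 < ‖relPos s k l t‖) ∧
      (∀ k l, OtherPair i j k l → ∀ t ∈ Set.Icc r₁ r₂, 2 < ‖relPos (reflect i j s) k l t‖) ∧
      Robust Q n r₂ (reflect i j s)

lemma eventually_far {f : (ι → V) × (ι → V) → (ι → V) × (ι → V)} {s₀ : (ι → V) × (ι → V)}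
    (hf : ContinuousAt f s₀) {k l : ι} {a b : ℝ}
    (h : ∀ t ∈ Set.Icc a b, 2 < ‖relPos (f s₀) k l t‖) :
    ∀ᶠ s in 𝓝 s₀, ∀ t ∈ Set.Icc a b, 2 < ‖relPos (f s) k l t‖ := by
  refine isCompact_Icc.eventually_forall_of_forall_eventually fun t ht => ?_
  have h1 : ContinuousAt (fun q : ((ι → V) × (ι → V)) × ℝ => (f q.1, q.2)) (s₀, t) :=
    (hf.comp (f := fun q : ((ι → V) × (ι → V)) × ℝ => q.1) continuousAt_fst).prodMk
      continuousAt_snd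
  have h2 : ContinuousAt (fun q : ((ι → V) × (ι → V)) × ℝ => ‖relPos (f q.1) k l q.2‖) (s₀, t) :=
    ((continuous_relPos k l).continuousAt.comp h1).norm
  exact h2.eventually (lt_mem_nhds (h t ht))

lemma isOpen_robust [Finite ι] {Q : Set ((ι → V) × (ι → V))} (hQ : IsOpen Q) (n : ℕ) (r : ℝ) :
    IsOpen {s | Robust Q n r s} := by
  induction n generalizing r with
  | zero =>
    refine isOpen_iff_mem_nhds.2 fun s hs => ?_
    refine (hQ.eventually_mem hs.1).and ?_
    simp only [eventually_all]
    exact fun k l hkl => eventually_far continuousAt_id (hs.2 k l hkl)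
  | succ n ih =>
    refine isOpen_iff_mem_nhds.2 fun s hs => ?_
    obtain ⟨i, j, r₁, r₂, h1, h2, h3, h4, h5, h6, h7, h8⟩ := hs
    have hc := continuousAt_reflect h1
    have e1 := (continuous_pairDisc i j).continuousAt.eventually (lt_mem_nhds h1)
    have e3 := (continuousAt_pairTime h1).eventually (lt_mem_nhds h3)
    have e4 := (continuousAt_pairTime h1).eventually (gt_mem_nhds h4)
    have e6 : ∀ᶠ s in 𝓝 s, ∀ k l, OtherPair i j k l →
        ∀ t ∈ Set.Icc r r₂, 2 < ‖relPos s k l t‖ := by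
      simp only [eventually_all]
      exact fun k l hkl => eventually_far continuousAt_id (h6 k l hkl)
    have e7 : ∀ᶠ s in 𝓝 s, ∀ k l, OtherPair i j k l →
        ∀ t ∈ Set.Icc r₁ r₂, 2 < ‖relPos (reflect i j s) k l t‖ := by
      simp only [eventually_all]
      exact fun k l hkl => eventually_far hc (h7 k l hkl)
    have e8 := hc.eventually ((ih r₂).eventually_mem h8)
    filter_upwards [e1, e3, e4, e6, e7, e8] with q q1 q3 q4 q6 q7 q8
    exact ⟨i, j, r₁, r₂, q1, h2, q3, q4, h5, q6, q7, q8⟩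

lemma IsFlow.collisionStep_of_entry {τ : ℕ → ℝ} {s : ℕ → (ι → V) × (ι → V)} (h : IsFlow τ s)
    {n : ℕ} {r r₂ : ℝ} {i j : ι} (hr : τ n ≤ r)
    (hno : ∀ k l t, τ n < t → t ≤ r → ¬ IsEntry (s n) k l t) (hd : 0 < pairDisc (s n) i j)
    (h1 : r < pairTime (s n) i j) (h2 : pairTime (s n) i j < r₂)
    (h3 : ∀ k l, OtherPair i j k l → ∀ t ∈ Set.Icc r r₂, 2 < ‖relPos (s n) k l t‖) :
    τ (n + 1) = pairTime (s n) i j ∧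
      CollisionStep i j (τ n) (s n) (τ (n + 1)) (s (n + 1)) := by
  have he := isEntry_pairTime hd
  rcases h.step n with ⟨k, l, h4⟩ | h4
  · have h5 : τ (n + 1) ≤ pairTime (s n) i j := by
      by_contra! hcon
      exact h4.not_isEntry (hr.trans h1.le) hcon he
    have h6 : r < τ (n + 1) := by
      by_contra! hcon
      exact hno k l _ h4.1 hcon h4.2.1
    have h7 : k = i ∧ l = j ∨ k = j ∧ l = i := by
      by_contra hcon
      have := h3 k l ⟨h4.2.1.ne, hcon⟩ _ ⟨h6.le, h5.trans h2.le⟩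
      exact this.ne' h4.2.1.1
    rcases h7 with ⟨rfl, rfl⟩ | ⟨rfl, rfl⟩
    · exact ⟨h4.2.1.pairTime_eq.symm, h4⟩
    · refine ⟨h4.2.1.symm.pairTime_eq.symm, h4.1, h4.2.1.symm, ?_, h4.2.2.2.1, ?_⟩
      · rw [h4.2.2.1, reflect_swap]
      · exact fun k l hkl h8 => (h4.2.2.2.2 k l hkl h8).symm
  · exact absurd he (h4.not_isEntry (hr.trans h1.le))

lemma IsFlow.of_robust {τ : ℕ → ℝ} {s : ℕ → (ι → V) × (ι → V)} (h : IsFlow τ s)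
    {Q : Set ((ι → V) × (ι → V))} (m n : ℕ) {r : ℝ} (hr : τ n ≤ r) (hr0 : r < 0)
    (hno : ∀ k l t, τ n < t → t ≤ r → ¬ IsEntry (s n) k l t) (hR : Robust Q m r (s n)) :
    (∀ k < m, ∃ i j, CollisionStep i j (τ (n + k)) (s (n + k)) (τ (n + k + 1)) (s (n + k + 1))) ∧
      τ (n + m) < 0 ∧ 0 < τ (n + m + 1) ∧ s (n + m) ∈ Q := by
  induction m generalizing n r with
  | zero =>
    refine ⟨by simp, by simpa using hr.trans_lt hr0, ?_, hR.1⟩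
    rcases h.step n with ⟨i, j, h1⟩ | h1
    · by_contra! hcon
      by_cases hc : τ (n + 1) ≤ r
      · exact hno i j _ h1.1 hc h1.2.1
      · exact (hR.2 i j h1.2.1.ne _ ⟨(not_le.1 hc).le, hcon⟩).ne' h1.2.1.1
    · rw [add_zero, h1.1]
      linarith [le_max_right (τ n) 0]
  | succ m ih =>
    obtain ⟨i, j, r₁, r₂, h1, h2, h3, h4, h5, h6, h7, h8⟩ := hR
    obtain ⟨hτ, hs⟩ := h.collisionStep_of_entry hr hno h1 (h2.trans_lt h3) h4 h6
    have := ih (n + 1) (r := r₂) (by linarith) h5 ?_ (by rwa [hs.2.2.1])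
    · rw [show n + 1 + m = n + (m + 1) by ring] at this
      refine ⟨fun k hk => ?_, this.2⟩
      rcases k with _ | k
      · exact ⟨i, j, hs⟩
      · have h9 := this.1 k (by omega)
        rwa [show n + 1 + k = n + (k + 1) by ring] at h9
    · intro k l t ht ht2 he
      rw [hs.2.2.1] at he
      by_cases hkl : k = i ∧ l = j ∨ k = j ∧ l = i
      · have h9 : ∀ t, τ (n + 1) < t → ¬ IsEntry (reflect i j (s n)) i j t := fun t ht =>
          not_isEntry_reflect hs.2.1 ht.le
        rcases hkl with ⟨rfl, rfl⟩ | ⟨rfl, rfl⟩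
        · exact h9 t ht he
        · exact h9 t ht he.symm
      · exact (h7 k l ⟨he.ne, hkl⟩ t ⟨by linarith, ht2⟩).ne' he.1

end Robust

/-! ### From sequences of collisions to systems of balls -/

section System

variable {ι : Type} [DecidableEq ι] [Fintype ι] {d : ℕ} {τ : ℕ → ℝ}
  {s : ℕ → (ι → EuclideanSpace ℝ (Fin d)) × (ι → EuclideanSpace ℝ (Fin d))}

namespace IsFlow

/-- The number of collisions, or free flights, which were completed up to time `t`. -/
noncomputable def rightIndex (h : IsFlow τ s) (t : ℝ) : ℕ := Nat.find (h.exists_lt t)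

lemma exists_le (h : IsFlow τ s) (t : ℝ) : ∃ n, t ≤ τ (n + 1) :=
  (h.exists_lt t).imp fun _ => le_of_lt

/-- The number of collisions, or free flights, which were completed before time `t`. -/
noncomputable def leftIndex (h : IsFlow τ s) (t : ℝ) : ℕ := Nat.find (h.exists_le t)

lemma rightIndex_eq_iff (h : IsFlow τ s) {t : ℝ} {n : ℕ} :
    h.rightIndex t = n ↔ t < τ (n + 1) ∧ (n = 0 ∨ τ n ≤ t) := by
  rw [rightIndex, Nat.find_eq_iff]
  refine and_congr_right fun _ => ?_
  rcases n with _ | n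
  · simp
  · simp only [not_lt, Nat.succ_ne_zero, false_or]
    exact ⟨fun h1 => h1 n (by omega),
      fun h1 m hm => (h.strictMono.monotone (by omega : m + 1 ≤ n + 1)).trans h1⟩

lemma leftIndex_eq_iff (h : IsFlow τ s) {t : ℝ} {n : ℕ} :
    h.leftIndex t = n ↔ t ≤ τ (n + 1) ∧ (n = 0 ∨ τ n < t) := by
  rw [leftIndex, Nat.find_eq_iff]
  refine and_congr_right fun _ => ?_
  rcases n with _ | n
  · simp
  · simp only [not_le, Nat.succ_ne_zero, false_or]
    exact ⟨fun h1 => h1 n (by omega),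
      fun h1 m hm => (h.strictMono.monotone (by omega : m + 1 ≤ n + 1)).trans_lt h1⟩

lemma index_cases (h : IsFlow τ s) (t : ℝ) :
    h.rightIndex t = h.leftIndex t ∨
      t = τ (h.leftIndex t + 1) ∧ h.rightIndex t = h.leftIndex t + 1 := by
  obtain ⟨h1, h2⟩ := h.leftIndex_eq_iff.1 (rfl : h.leftIndex t = _)
  rcases h1.lt_or_eq with h3 | h3
  · exact Or.inl (h.rightIndex_eq_iff.2 ⟨h3, h2.imp_right le_of_lt⟩)
  · refine Or.inr ⟨h3, h.rightIndex_eq_iff.2 ⟨?_, Or.inr h3.ge⟩⟩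
    exact h3.trans_lt (h.lt_succ _)

lemma index_at (h : IsFlow τ s) (n : ℕ) :
    h.leftIndex (τ (n + 1)) = n ∧ h.rightIndex (τ (n + 1)) = n + 1 :=
  ⟨h.leftIndex_eq_iff.2 ⟨le_rfl, Or.inr (h.lt_succ n)⟩,
    h.rightIndex_eq_iff.2 ⟨h.lt_succ _, Or.inr le_rfl⟩⟩

/-- Positions of the balls. -/
noncomputable def path (h : IsFlow τ s) (i : ι) (t : ℝ) : EuclideanSpace ℝ (Fin d) :=
  (s (h.rightIndex t)).1 i + t • (s (h.rightIndex t)).2 i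

lemma path_eq_left (h : IsFlow τ s) (i : ι) (t : ℝ) :
    h.path i t = (s (h.leftIndex t)).1 i + t • (s (h.leftIndex t)).2 i := by
  rw [path]
  rcases h.index_cases t with h1 | ⟨h1, h2⟩
  · rw [h1]
  · rw [h2]
    have := h.pos_succ (h.leftIndex t) i
    rwa [← h1] at this

lemma path_sub (h : IsFlow τ s) (i j : ι) (t : ℝ) :
    h.path i t - h.path j t = relPos (s (h.leftIndex t)) i j t := by
  rw [path_eq_left, path_eq_left, relPos_eq]

end IsFlow

lemma CollisionStep.swap {V : Type*} [NormedAddCommGroup V] [InnerProductSpace ℝ V]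
    {s s' : (ι → V) × (ι → V)} {τ τ' : ℝ} {i j : ι} (h : CollisionStep i j τ s τ' s') :
    CollisionStep j i τ s τ' s' :=
  ⟨h.1, h.2.1.symm, by rw [reflect_swap]; exact h.2.2.1, h.2.2.2.1,
    fun k l hkl h8 => (h.2.2.2.2 k l hkl h8).symm⟩

section Velocity

variable {V : Type*} [NormedAddCommGroup V] [InnerProductSpace ℝ V]
  {s s' : (ι → V) × (ι → V)} {τ τ' : ℝ} {i j : ι}

lemma CollisionStep.snd_left (h : CollisionStep i j τ s τ' s') :
    s'.2 i = s.2 i - ⟪s.2 i - s.2 j, (2⁻¹ : ℝ) • relPos s i j τ'⟫ •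
      ((2⁻¹ : ℝ) • relPos s i j τ') := by
  rw [h.2.2.1]
  simp only [reflect, kick, impulse, h.2.1.pairTime_eq, Pi.add_apply, Pi.smul_apply,
    dipole_left h.2.1.ne]
  rw [neg_smul, ← sub_eq_add_neg, real_inner_comm]
  rfl

lemma CollisionStep.snd_right (h : CollisionStep i j τ s τ' s') :
    s'.2 j = s.2 j + ⟪s.2 i - s.2 j, (2⁻¹ : ℝ) • relPos s i j τ'⟫ •
      ((2⁻¹ : ℝ) • relPos s i j τ') := by
  rw [h.2.2.1]
  simp only [reflect, kick, impulse, h.2.1.pairTime_eq, Pi.add_apply, Pi.smul_apply,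
    dipole_right h.2.1.ne]
  rw [neg_smul, smul_neg, neg_neg, real_inner_comm]
  rfl

lemma CollisionStep.snd_other (h : CollisionStep i j τ s τ' s') {k : ι} (hi : k ≠ i)
    (hj : k ≠ j) : s'.2 k = s.2 k := by
  rw [h.2.2.1]
  simp only [reflect, kick, Pi.add_apply, Pi.smul_apply, dipole_other hi hj, smul_zero, add_zero]

lemma CollisionStep.snd_left_ne (h : CollisionStep i j τ s τ' s') : s'.2 i ≠ s.2 i := by
  rw [h.snd_left]
  intro h1
  have h2 := h.2.1.2
  have h3 : relPos s i j τ' ≠ 0 := fun h4 => by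
    have := h.2.1.1
    rw [h4] at this
    simp at this
  rw [sub_eq_self, smul_eq_zero, real_inner_smul_right, real_inner_comm, mul_eq_zero] at h1
  rcases h1 with (h1 | h1) | h1
  · norm_num at h1
  · exact h2.ne h1
  · exact h3 ((smul_eq_zero.1 h1).resolve_left (by norm_num))

end Velocity

namespace IsFlow

/-- The system of balls given by a sequence of collisions. -/
noncomputable def ballSystem (h : IsFlow τ s)
    (hb : ∀ i j, i ≠ j → ∀ t, t ≤ τ 0 → 2 ≤ ‖relPos (s 0) i j t‖) :
    BallSystem ι d Set.univ where
  x := h.path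
  vr i t := (s (h.rightIndex t)).2 i
  vl i t := (s (h.leftIndex t)).2 i
  right_lin := by
    intro i t _
    obtain ⟨h1, h2⟩ := h.rightIndex_eq_iff.1 (rfl : h.rightIndex t = _)
    refine ⟨(τ (h.rightIndex t + 1) - t) / 2, by linarith, fun r hr => ?_⟩
    have h3 : h.rightIndex r = h.rightIndex t :=
      h.rightIndex_eq_iff.2 ⟨by linarith [hr.1.2], h2.imp_right fun h4 => h4.trans hr.1.1⟩
    rw [path, path, h3]
    module
  left_lin := by
    intro i t _
    obtain ⟨h1, h2⟩ := h.leftIndex_eq_iff.1 (rfl : h.leftIndex t = _)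
    have h3 : ∃ ε > 0, ∀ r ∈ Set.Icc (t - ε) t, h.leftIndex r = h.leftIndex t := by
      rcases h2 with h2 | h2
      · exact ⟨1, one_pos, fun r hr => h.leftIndex_eq_iff.2 ⟨hr.2.trans h1, Or.inl h2⟩⟩
      · exact ⟨(t - τ (h.leftIndex t)) / 2, by linarith,
          fun r hr => h.leftIndex_eq_iff.2 ⟨hr.2.trans h1, Or.inr (by linarith [hr.1])⟩⟩
    obtain ⟨ε, hε, h4⟩ := h3
    refine ⟨ε, hε, fun r hr => ?_⟩
    rw [path_eq_left, path_eq_left, h4 r hr.1]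
    module
  dist_ge := by
    intro i j hij t _
    rw [path_sub]
    obtain ⟨h1, h2⟩ := h.leftIndex_eq_iff.1 (rfl : h.leftIndex t = _)
    by_cases ht : τ (h.leftIndex t) ≤ t
    · exact h.dist_ge _ hij ⟨ht, h1⟩
    · have h3 := h2.resolve_right fun h4 => ht h4.le
      rw [h3] at ht ⊢
      exact hb i j hij t (not_le.1 ht).le
  collision_rule := by
    intro i t _ _ hne
    rcases h.index_cases t with h1 | ⟨h1, h2⟩
    · rw [h1] at hne
      exact absurd rfl hne
    · simp only [path_sub]
      rw [h2] at hne ⊢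
      generalize h.leftIndex t = n at h1 hne
      rcases h.step n with ⟨k, l, h3⟩ | h3
      · have h4 : ∃ l, CollisionStep i l (τ n) (s n) (τ (n + 1)) (s (n + 1)) := by
          by_cases hik : i = k
          · exact ⟨l, by rwa [hik]⟩
          · by_cases hil : i = l
            · exact ⟨k, by rw [hil]; exact h3.swap⟩
            · exact absurd (h3.snd_other hik hil) hne
        obtain ⟨l, h4⟩ := h4
        rw [h1]
        refine ⟨l, h4.2.1.ne.symm, h4.2.1.1, h4.swap.snd_left_ne, fun k hk hk2 => ?_,
          fun k hk hk2 => h4.snd_other hk hk2, h4.snd_left, h4.snd_right⟩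
        rcases h4.2.2.2.2 i k hk.symm hk2 with h5 | h5
        · exact h5.2
        · exact absurd h5.2 hk
      · exact absurd (by rw [h3.2.1]) hne

variable {hb : ∀ i j, i ≠ j → ∀ t, t ≤ τ 0 → 2 ≤ ‖relPos (s 0) i j t‖}

lemma mem_collisions (h : IsFlow τ s) {p : ℝ × Finset ι} :
    p ∈ (h.ballSystem hb).collisions ↔ ∃ n i j,
      CollisionStep i j (τ n) (s n) (τ (n + 1)) (s (n + 1)) ∧ p = (τ (n + 1), {i, j}) := by
  constructor
  · rintro ⟨-, -, i, j, hij, h1, h2, h3, h4⟩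
    simp only [ballSystem, path_sub] at h2 h3 h4
    rcases h.index_cases p.1 with h5 | ⟨h5, h6⟩
    · rw [h5] at h3
      exact absurd rfl h3
    · rw [h6] at h3
      generalize h.leftIndex p.1 = n at h2 h3 h5
      rcases h.step n with ⟨k, l, h7⟩ | h7
      · rw [h5] at h2
        refine ⟨n, k, l, h7, Prod.ext h5 ?_⟩
        rcases h7.2.2.2.2 i j hij h2 with ⟨rfl, rfl⟩ | ⟨rfl, rfl⟩
        · exact h1
        · rw [h1, Finset.pair_comm]
      · exact absurd (by rw [h7.2.1]) h3
  · rintro ⟨n, i, j, h1, rfl⟩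
    refine ⟨trivial, ⟨τ n, trivial, h1.1⟩, i, j, h1.2.1.ne, rfl, ?_⟩
    simp only [ballSystem, path_sub, (h.index_at n).1, (h.index_at n).2]
    exact ⟨h1.2.1.1, h1.snd_left_ne, h1.swap.snd_left_ne⟩

end IsFlow

/-- The same system of balls, in a different unit of time. -/
noncomputable def changeTime {c : ℝ} (hc : 0 < c) (S : BallSystem ι d Set.univ) :
    BallSystem ι d Set.univ where
  x i t := S.x i (c * t)
  vr i t := c • S.vr i (c * t)
  vl i t := c • S.vl i (c * t)
  right_lin := by
    intro i t _
    obtain ⟨ε, hε, h⟩ := S.right_lin i (c * t) trivial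
    refine ⟨ε / c, by positivity, fun r hr => ?_⟩
    rw [h (c * r) ⟨⟨mul_le_mul_of_nonneg_left hr.1.1 hc.le, ?_⟩, trivial⟩]
    · module
    · have := mul_le_mul_of_nonneg_left hr.1.2 hc.le
      rwa [mul_add, mul_div_cancel₀ _ hc.ne'] at this
  left_lin := by
    intro i t _
    obtain ⟨ε, hε, h⟩ := S.left_lin i (c * t) trivial
    refine ⟨ε / c, by positivity, fun r hr => ?_⟩
    rw [h (c * r) ⟨⟨?_, mul_le_mul_of_nonneg_left hr.1.2 hc.le⟩, trivial⟩]
    · module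
    · have := mul_le_mul_of_nonneg_left hr.1.1 hc.le
      rwa [mul_sub, mul_div_cancel₀ _ hc.ne'] at this
  dist_ge i j hij t _ := S.dist_ge i j hij _ trivial
  collision_rule := by
    intro i t _ _ hne
    obtain ⟨j, h1, h2, h3, h4, h5, h6, h7⟩ := S.collision_rule i (c * t) trivial
      ⟨c * t - 1, trivial, by linarith⟩ fun h => hne (by rw [h])
    refine ⟨j, h1, h2, fun h => h3 ?_, h4, fun k hk hk2 => by rw [h5 k hk hk2], ?_, ?_⟩
    · exact smul_right_injective _ hc.ne' h
    · rw [h6, ← smul_sub, real_inner_smul_left]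
      module
    · rw [h7, ← smul_sub, real_inner_smul_left]
      module

lemma mem_collisions_changeTime {c : ℝ} (hc : 0 < c) (S : BallSystem ι d Set.univ)
    {p : ℝ × Finset ι} : p ∈ (changeTime hc S).collisions ↔ (c * p.1, p.2) ∈ S.collisions := by
  have h : ∀ v w : EuclideanSpace ℝ (Fin d), c • v ≠ c • w ↔ v ≠ w := fun v w =>
    (smul_right_injective _ hc.ne').ne_iff
  simp only [BallSystem.collisions, Set.mem_ofPred_eq, changeTime, Set.mem_univ, true_and, h]
  exact and_congr_left fun _ => ⟨fun _ => ⟨c * p.1 - 1, by linarith⟩,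
    fun _ => ⟨p.1 - 1, by linarith⟩⟩

lemma speedNorm_changeTime {c : ℝ} (hc : 0 < c) (S : BallSystem ι d Set.univ) (t : ℝ) :
    (changeTime hc S).speedNorm t = c * S.speedNorm (c * t) := by
  rw [BallSystem.speedNorm, BallSystem.speedNorm]
  simp only [changeTime, norm_smul, mul_pow, Real.norm_eq_abs, sq_abs, ← Finset.mul_sum]
  rw [Real.sqrt_mul (sq_nonneg c), Real.sqrt_sq hc.le]

/-- Collisions of the system before time `0`. -/
lemma IsFlow.early_collisions (h : IsFlow τ s)
    {hb : ∀ i j, i ≠ j → ∀ t, t ≤ τ 0 → 2 ≤ ‖relPos (s 0) i j t‖} {K : ℕ}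
    (hK : ∀ k < K, ∃ i j, CollisionStep i j (τ k) (s k) (τ (k + 1)) (s (k + 1)))
    (hK0 : τ K < 0) (hK1 : 0 < τ (K + 1)) {c : ℝ} (hc : 0 < c) :
    {p ∈ (changeTime hc (h.ballSystem hb)).collisions | p.1 ∈ Set.Ioo (τ 0 / c) 0}.Finite ∧
    {p ∈ (changeTime hc (h.ballSystem hb)).collisions | p.1 ∈ Set.Ioo (τ 0 / c) 0}.ncard = K := by
  have h1 : ∀ k : Fin K, ∃ q : ι × ι,
      CollisionStep q.1 q.2 (τ k) (s k) (τ (k + 1)) (s (k + 1)) := by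
    intro k
    obtain ⟨i, j, hij⟩ := hK k k.2
    exact ⟨(i, j), hij⟩
  choose q hq using h1
  set f : Fin K → ℝ × Finset ι := fun k => (τ (k + 1) / c, {(q k).1, (q k).2}) with hf
  have hfi : Function.Injective f := by
    intro k l hkl
    have h2 : τ (k + 1) / c = τ (l + 1) / c := congrArg Prod.fst hkl
    have h3 := h.strictMono.injective ((div_left_inj' hc.ne').1 h2)
    exact Fin.ext (by omega)
  have hset : {p ∈ (changeTime hc (h.ballSystem hb)).collisions | p.1 ∈ Set.Ioo (τ 0 / c) 0} =
      Set.range f := by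
    ext p
    simp only [Set.mem_ofPred_eq, mem_collisions_changeTime, h.mem_collisions, Set.mem_range,
      Set.mem_Ioo]
    constructor
    · rintro ⟨⟨n, i, j, h2, h3⟩, h4, h5⟩
      have h6 : c * p.1 = τ (n + 1) := congrArg Prod.fst h3
      have h7 : n < K := by
        by_contra! hcon
        have h8 : τ (K + 1) ≤ τ (n + 1) := h.strictMono.monotone (by omega)
        nlinarith
      refine ⟨⟨n, h7⟩, Prod.ext ?_ ?_⟩
      · simp only [hf]
        rw [← h6, mul_div_cancel_left₀ _ hc.ne']
      · have h8 : p.2 = {i, j} := congrArg Prod.snd h3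
        have h9 := hq ⟨n, h7⟩
        simp only [hf, h8]
        rcases h9.2.2.2.2 i j h2.2.1.ne h2.2.1.1 with ⟨h10, h11⟩ | ⟨h10, h11⟩
        · rw [h10, h11]
        · rw [h10, h11, Finset.pair_comm]
    · rintro ⟨k, rfl⟩
      refine ⟨⟨k, (q k).1, (q k).2, hq k, ?_⟩, ?_, ?_⟩
      · simp only [hf, mul_div_cancel₀ _ hc.ne']
      · exact div_lt_div_of_pos_right (h.strictMono (by omega)) hc
      · refine div_neg_of_neg_of_pos (lt_of_le_of_lt ?_ hK0) hc
        exact h.strictMono.monotone (by omega)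
  rw [hset]
  refine ⟨Set.finite_range f, ?_⟩
  rw [← Set.image_univ, Set.ncard_image_of_injective _ hfi, Set.ncard_univ, Nat.card_fin]

end System

/-! ### Two chains of discs and one fast disc -/

section Chains

/-- The directions of the two chains. -/
noncomputable def dir : Bool → EuclideanSpace ℝ (Fin 2)
  | false => w1
  | true => w2

lemma inner_fin_two (x y : EuclideanSpace ℝ (Fin 2)) : ⟪x, y⟫ = x 0 * y 0 + x 1 * y 1 := by
  rw [PiLp.inner_apply, Fin.sum_univ_two]
  simp only [RCLike.inner_apply, conj_trivial]
  ring

lemma sqrt_three_sq : √3 * √3 = (3 : ℝ) := Real.mul_self_sqrt (by norm_num)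

lemma inner_w0_w0 : ⟪w0, w0⟫ = 1 := by
  rw [inner_fin_two]
  simp [w0]

lemma inner_w0_dir (β : Bool) : ⟪w0, dir β⟫ = 1 / 2 := by
  rw [inner_fin_two]
  cases β <;> simp [w0, w1, w2, dir]

lemma inner_dir_w0 (β : Bool) : ⟪dir β, w0⟫ = 1 / 2 := by
  rw [real_inner_comm, inner_w0_dir]

lemma inner_dir_self (β : Bool) : ⟪dir β, dir β⟫ = 1 := by
  rw [inner_fin_two]
  have := sqrt_three_sq
  cases β <;> simp [w1, w2, dir] <;> linarith

lemma inner_dir_of_ne {β γ : Bool} (h : β ≠ γ) : ⟪dir β, dir γ⟫ = -(1 / 2) := by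
  rw [inner_fin_two]
  have := sqrt_three_sq
  cases β <;> cases γ <;> simp [w1, w2, dir] at h ⊢ <;> linarith

lemma norm_dir (β : Bool) : ‖dir β‖ = 1 := by
  rw [norm_eq_sqrt_real_inner, inner_dir_self, Real.sqrt_one]

lemma norm_w0 : ‖w0‖ = 1 := by
  rw [norm_eq_sqrt_real_inner, inner_w0_w0, Real.sqrt_one]

variable {n : ℕ}

/-- The discs of the two chains. -/
def ball : Bool → Fin n → BBIndex 1 n
  | false, k => Sum.inr (Sum.inl k)
  | true, k => Sum.inr (Sum.inr k)

/-- The fast disc. -/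
def cue : BBIndex 1 n := Sum.inl 0

lemma index_cases (i : BBIndex 1 n) : i = cue ∨ ∃ β k, i = ball β k := by
  rcases i with i | i | i
  · exact Or.inl (congrArg Sum.inl (Subsingleton.elim _ _))
  · exact Or.inr ⟨false, i, rfl⟩
  · exact Or.inr ⟨true, i, rfl⟩

lemma ball_injective {β γ : Bool} {k l : Fin n} (h : ball β k = ball γ l) : β = γ ∧ k = l := by
  cases β <;> cases γ <;> simp [ball] at h ⊢ <;> exact h

/-- The time when the points moving along two lines meet. -/
noncomputable def meetTime (z V : Bool → Fin n → ℝ) (β : Bool) (a b : Fin n) : ℝ :=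
  -(z β b - z β a) / (V β b - V β a)

/-- Two families of slowly moving points on half lines, approaching the origin, together with the
height of the fast disc at time `0`. -/
structure Lines (n : ℕ) where
  y : ℝ
  z : Bool → Fin n → ℝ
  V : Bool → Fin n → ℝ
  y_pos : 0 < y
  z_pos : ∀ β a, 0 < z β a
  V_neg : ∀ β a, V β a < 0
  z_mono : ∀ β, StrictMono (z β)
  V_mono : ∀ β, StrictMono (V β)
  meetTime_inj : ∀ β a b γ c d, a < b → c < d → meetTime z V β a b = meetTime z V γ c d →
    β = γ ∧ a = c ∧ b = d

namespace Lines

variable (D : Lines n)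

/-- The position of a point at time `t`. -/
def pos (β : Bool) (a : Fin n) (t : ℝ) : ℝ := D.z β a + t * D.V β a

/-- The time when two points meet. -/
noncomputable def meet (β : Bool) (a b : Fin n) : ℝ := meetTime D.z D.V β a b

lemma meet_neg (β : Bool) {a b : Fin n} (h : a < b) : D.meet β a b < 0 := by
  have h1 := D.z_mono β h
  have h2 := D.V_mono β h
  exact div_neg_of_neg_of_pos (by linarith) (by linarith)

lemma pos_sub (β : Bool) {a b : Fin n} (h : a < b) (t : ℝ) :
    D.pos β b t - D.pos β a t = (D.V β b - D.V β a) * (t - D.meet β a b) := by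
  have h2 : D.V β b - D.V β a ≠ 0 := (sub_pos.2 (D.V_mono β h)).ne'
  rw [meet, meetTime, mul_sub, mul_div_cancel₀ _ h2, pos, pos]
  ring

lemma pos_lt_iff (β : Bool) {a b : Fin n} (h : a < b) (t : ℝ) :
    D.pos β a t < D.pos β b t ↔ D.meet β a b < t := by
  have h1 := D.pos_sub β h t
  have h2 : 0 < D.V β b - D.V β a := sub_pos.2 (D.V_mono β h)
  rw [← sub_pos, h1, mul_pos_iff_of_pos_left h2, sub_pos]

lemma pos_gt_iff (β : Bool) {a b : Fin n} (h : a < b) (t : ℝ) :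
    D.pos β b t < D.pos β a t ↔ t < D.meet β a b := by
  have h1 := D.pos_sub β h t
  have h2 : 0 < D.V β b - D.V β a := sub_pos.2 (D.V_mono β h)
  rw [← sub_neg, h1, ← neg_pos, ← mul_neg, mul_pos_iff_of_pos_left h2, neg_sub, sub_pos]

lemma pos_eq_iff (β : Bool) {a b : Fin n} (h : a < b) (t : ℝ) :
    D.pos β a t = D.pos β b t ↔ t = D.meet β a b := by
  rcases lt_trichotomy t (D.meet β a b) with h1 | h1 | h1
  · exact iff_of_false ((D.pos_gt_iff β h t).2 h1).ne' h1.ne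
  · refine iff_of_true ?_ h1
    have h2 := D.pos_sub β h t
    rw [h1, sub_self, mul_zero] at h2
    rw [h1]
    linarith
  · exact iff_of_false ((D.pos_lt_iff β h t).2 h1).ne h1.ne'

/-- Points which do not meet remain in the same order. -/
lemma pos_lt_of_pos_lt {β : Bool} {a b : Fin n} {u v t t' : ℝ}
    (h : ∀ c d, c < d → (c = a ∧ d = b ∨ c = b ∧ d = a) → D.meet β c d ∉ Set.Icc u v)
    (ht : t ∈ Set.Icc u v) (ht' : t' ∈ Set.Icc u v) (hab : D.pos β a t < D.pos β b t) :
    D.pos β a t' < D.pos β b t' := by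
  rcases lt_trichotomy a b with h1 | h1 | h1
  · have h2 := h a b h1 (Or.inl ⟨rfl, rfl⟩)
    rw [pos_lt_iff _ _ h1] at hab ⊢
    by_contra! hcon
    exact h2 ⟨ht'.1.trans hcon, hab.le.trans ht.2⟩
  · rw [h1] at hab
    exact absurd hab (lt_irrefl _)
  · have h2 := h b a h1 (Or.inr ⟨rfl, rfl⟩)
    rw [pos_gt_iff _ _ h1] at hab ⊢
    by_contra! hcon
    exact h2 ⟨ht.1.trans hab.le, hcon.trans ht'.2⟩

lemma pos_pos (β : Bool) (a : Fin n) {t : ℝ} (ht : t ≤ 0) : 0 < D.pos β a t := by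
  have h1 := D.z_pos β a
  have h2 := D.V_neg β a
  rw [pos]
  nlinarith

/-- The distance from the origin of the disc with index `k` in its chain, if it is governed by
point `a`. -/
noncomputable def height (β : Bool) (k a : Fin n) (t : ℝ) : ℝ :=
  2 * ((k : ℝ) + 1) + D.y / 2 + D.pos β a t

/-- Line data of all discs, if the chains are governed by the points permuted by `σ`. -/
noncomputable def state (σ : Bool → Equiv.Perm (Fin n)) :
    (BBIndex 1 n → EuclideanSpace ℝ (Fin 2)) × (BBIndex 1 n → EuclideanSpace ℝ (Fin 2)) :=
  (Sum.elim (fun _ => D.y • w0) (Sum.elim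
      (fun k => D.height false k (σ false k) 0 • dir false)
      (fun k => D.height true k (σ true k) 0 • dir true)),
    Sum.elim (fun _ => w0) (Sum.elim
      (fun k => D.V false (σ false k) • dir false) (fun k => D.V true (σ true k) • dir true)))

variable (σ : Bool → Equiv.Perm (Fin n))

lemma state_fst_cue : (D.state σ).1 cue = D.y • w0 := rfl

lemma state_snd_cue : (D.state σ).2 cue = w0 := rfl

lemma state_fst_ball (β : Bool) (k : Fin n) :
    (D.state σ).1 (ball β k) = D.height β k (σ β k) 0 • dir β := by cases β <;> rfl

lemma state_snd_ball (β : Bool) (k : Fin n) :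
    (D.state σ).2 (ball β k) = D.V β (σ β k) • dir β := by cases β <;> rfl

lemma height_eq (β : Bool) (k a : Fin n) (t : ℝ) :
    D.height β k a t = D.height β k a 0 + t * D.V β a := by
  simp only [height, pos]
  ring

lemma height_gt (β : Bool) (k a : Fin n) {t : ℝ} (ht : t ≤ 0) :
    2 + D.y / 2 < D.height β k a t := by
  have := D.pos_pos β a ht
  have : (0 : ℝ) ≤ k := by positivity
  rw [height]
  linarith

lemma height_sub (β : Bool) (k l a b : Fin n) (t : ℝ) :
    D.height β k a t - D.height β l b t =
      2 * ((k : ℝ) - l) + (D.pos β a t - D.pos β b t) := by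
  rw [height, height]
  ring

lemma relPos_ball (β γ : Bool) (k l : Fin n) (t : ℝ) :
    relPos (D.state σ) (ball β k) (ball γ l) t =
      D.height β k (σ β k) t • dir β - D.height γ l (σ γ l) t • dir γ := by
  rw [relPos_eq, state_fst_ball, state_fst_ball, state_snd_ball, state_snd_ball,
    D.height_eq β _ _ t, D.height_eq γ _ _ t]
  module

lemma relVel_ball (β γ : Bool) (k l : Fin n) :
    relVel (D.state σ) (ball β k) (ball γ l) =
      D.V β (σ β k) • dir β - D.V γ (σ γ l) • dir γ := by
  rw [relVel, state_snd_ball, state_snd_ball]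

lemma relPos_cue (β : Bool) (k : Fin n) (t : ℝ) :
    relPos (D.state σ) (ball β k) cue t =
      D.height β k (σ β k) t • dir β - (D.y + t) • w0 := by
  rw [relPos_eq, state_fst_ball, state_fst_cue, state_snd_ball, state_snd_cue,
    D.height_eq β _ _ t]
  module

lemma relVel_cue (β : Bool) (k : Fin n) :
    relVel (D.state σ) (ball β k) cue = D.V β (σ β k) • dir β - (1 : ℝ) • w0 := by
  rw [relVel, state_snd_ball, state_snd_cue, one_smul]

lemma inner_smul_dir (β γ : Bool) (h : β ≠ γ) (a b c d : ℝ) :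
    ⟪a • dir β - b • dir γ, c • dir β - d • dir γ⟫ = a * c + b * d + (a * d + b * c) / 2 := by
  simp only [inner_sub_left, inner_sub_right, real_inner_smul_left, real_inner_smul_right,
    inner_dir_self, inner_dir_of_ne h, inner_dir_of_ne h.symm]
  ring

lemma inner_smul_w0 (β : Bool) (a b c d : ℝ) :
    ⟪a • dir β - b • w0, c • dir β - d • w0⟫ = a * c + b * d - (a * d + b * c) / 2 := by
  simp only [inner_sub_left, inner_sub_right, real_inner_smul_left, real_inner_smul_right,
    inner_dir_self, inner_dir_w0, inner_w0_dir, inner_w0_w0]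
  ring

lemma two_lt_norm {x : EuclideanSpace ℝ (Fin 2)} (h : 4 < ⟪x, x⟫) : 2 < ‖x‖ := by
  rw [real_inner_self_eq_norm_sq] at h
  nlinarith [norm_nonneg x]

/-- Induction over pairs of discs. -/
lemma pair_induction {P : BBIndex 1 n → BBIndex 1 n → Prop} (hs : ∀ i j, P i j → P j i)
    (h1 : ∀ β k, P (ball β k) cue) (h2 : ∀ k l, P (ball false k) (ball true l))
    {i j : BBIndex 1 n} (hij : i ≠ j)
    (h3 : ∀ β k l, k < l → (i = ball β k ∧ j = ball β l ∨ i = ball β l ∧ j = ball β k) →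
      P (ball β l) (ball β k)) : P i j := by
  rcases index_cases i with rfl | ⟨β, k, rfl⟩ <;> rcases index_cases j with rfl | ⟨γ, l, rfl⟩
  · exact absurd rfl hij
  · exact hs _ _ (h1 _ _)
  · exact h1 _ _
  · by_cases hβγ : β = γ
    · subst hβγ
      rcases lt_trichotomy k l with h | h | h
      · exact hs _ _ (h3 β k l h (Or.inl ⟨rfl, rfl⟩))
      · exact absurd (by rw [h]) hij
      · exact h3 β l k h (Or.inr ⟨rfl, rfl⟩)
    · cases β <;> cases γ
      · exact absurd rfl hβγ
      · exact h2 _ _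
      · exact hs _ _ (h2 _ _)
      · exact absurd rfl hβγ

/-- Discs whose chains are in order are far apart. -/
lemma far {t : ℝ} (ht : t ≤ 0) {i j : BBIndex 1 n} (hij : i ≠ j)
    (h : ∀ β k l, k < l → (i = ball β k ∧ j = ball β l ∨ i = ball β l ∧ j = ball β k) →
      D.pos β (σ β k) t < D.pos β (σ β l) t) : 2 < ‖relPos (D.state σ) i j t‖ := by
  have hy := D.y_pos
  refine pair_induction (P := fun i j => 2 < ‖relPos (D.state σ) i j t‖) ?_ ?_ ?_ hij ?_
  · intro i j h
    rwa [relPos_swap _ i j, norm_neg]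
  · intro β k
    refine two_lt_norm ?_
    have := D.height_gt β k (σ β k) ht
    rw [relPos_cue, inner_smul_w0]
    have h1 : 2 < D.height β k (σ β k) t - (D.y + t) / 2 := by linarith
    nlinarith [sq_nonneg (D.y + t)]
  · intro k l
    refine two_lt_norm ?_
    have h1 := D.height_gt false k (σ false k) ht
    have h2 := D.height_gt true l (σ true l) ht
    rw [relPos_ball, inner_smul_dir _ _ (by decide)]
    nlinarith
  · intro β k l hkl hij
    have h1 := h β k l hkl hij
    have h2 : (k : ℝ) + 1 ≤ l := by exact_mod_cast hkl
    rw [relPos_ball, ← sub_smul, height_sub, norm_smul, norm_dir, mul_one, Real.norm_eq_abs]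
    exact lt_of_lt_of_le (by linarith) (le_abs_self _)

/-- Long ago all the discs approach each other. -/
lemma approach {t : ℝ} (ht : t ≤ 0) (hy : D.y + t < 0) {i j : BBIndex 1 n} (hij : i ≠ j)
    (h : ∀ β k l, k < l → D.pos β (σ β k) t < D.pos β (σ β l) t)
    (hV : ∀ β k l, k < l → D.V β (σ β l) < D.V β (σ β k)) :
    ⟪relPos (D.state σ) i j t, relVel (D.state σ) i j⟫ < 0 := by
  have hy := D.y_pos
  refine pair_induction
    (P := fun i j => ⟪relPos (D.state σ) i j t, relVel (D.state σ) i j⟫ < 0) ?_ ?_ ?_ hij ?_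
  · intro i j h
    rwa [relPos_swap _ i j, relVel_swap _ i j, inner_neg_neg]
  · intro β k
    have h1 := D.height_gt β k (σ β k) ht
    have h2 := D.V_neg β (σ β k)
    rw [relPos_cue, relVel_cue, inner_smul_w0]
    nlinarith
  · intro k l
    have h1 := D.height_gt false k (σ false k) ht
    have h2 := D.height_gt true l (σ true l) ht
    have h3 := D.V_neg false (σ false k)
    have h4 := D.V_neg true (σ true l)
    rw [relPos_ball, relVel_ball, inner_smul_dir _ _ (by decide)]
    generalize D.height false k (σ false k) t = P at h1 ⊢
    generalize D.height true l (σ true l) t = R at h2 ⊢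
    have hP : 0 < P := by linarith
    have hR : 0 < R := by linarith
    nlinarith [mul_neg_of_pos_of_neg hP h3, mul_neg_of_pos_of_neg hP h4,
      mul_neg_of_pos_of_neg hR h3, mul_neg_of_pos_of_neg hR h4]
  · intro β k l hkl _
    have h1 := h β k l hkl
    have h2 : (k : ℝ) + 1 ≤ l := by exact_mod_cast hkl
    have h3 := hV β k l hkl
    rw [relPos_ball, relVel_ball, ← sub_smul, ← sub_smul, height_sub, real_inner_smul_left,
      real_inner_smul_right, inner_dir_self, mul_one]
    exact mul_neg_of_pos_of_neg (by linarith) (by linarith)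

end Lines

end Chains

section Chains

variable {n : ℕ}

namespace Lines

variable (D : Lines n) (σ : Bool → Equiv.Perm (Fin n))

/-- The order of the two chains after the exchange of two discs. -/
def exchange (β : Bool) (k l : Fin n) : Bool → Equiv.Perm (Fin n) :=
  Function.update σ β (σ β * Equiv.swap k l)

lemma exchange_apply (β : Bool) (k l m : Fin n) :
    exchange σ β k l β m = σ β (Equiv.swap k l m) := by
  simp [exchange]

lemma exchange_of_ne {β γ : Bool} (h : γ ≠ β) (k l : Fin n) : exchange σ β k l γ = σ γ := by
  simp [exchange, h]

section Adjacent

variable {β : Bool} {k l : Fin n}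

lemma relPos_meet (hkl : (l : ℕ) = k + 1) (h : σ β l < σ β k) :
    relPos (D.state σ) (ball β l) (ball β k) (D.meet β (σ β l) (σ β k)) =
      (2 : ℝ) • dir β := by
  have h1 := (D.pos_eq_iff β h _).2 rfl
  have h2 : (l : ℝ) = k + 1 := by exact_mod_cast hkl
  rw [relPos_ball, ← sub_smul, height_sub, h1, h2]
  congr 1
  ring

lemma relVel_meet : relVel (D.state σ) (ball β l) (ball β k) =
    (D.V β (σ β l) - D.V β (σ β k)) • dir β := by
  rw [relVel_ball, sub_smul]

lemma isEntry_meet (hkl : (l : ℕ) = k + 1) (h : σ β l < σ β k) :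
    IsEntry (D.state σ) (ball β l) (ball β k) (D.meet β (σ β l) (σ β k)) := by
  rw [IsEntry, D.relPos_meet σ hkl h, relVel_meet, norm_smul, norm_dir, real_inner_smul_left,
    real_inner_smul_right, inner_dir_self]
  have := D.V_mono β h
  norm_num
  linarith

lemma kick_meet (hkl : (l : ℕ) = k + 1) (h : σ β l < σ β k) :
    kick (D.state σ) (ball β l) (ball β k) =
      (D.V β (σ β k) - D.V β (σ β l)) • dipole (ball β l) (ball β k) (dir β) := by
  rw [kick, impulse, (D.isEntry_meet σ hkl h).pairTime_eq, D.relPos_meet σ hkl h, relVel_meet,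
    smul_smul, inv_mul_cancel₀ two_ne_zero, one_smul, real_inner_smul_right, inner_dir_self,
    mul_one, neg_sub]

lemma reflect_state (hkl : (l : ℕ) = k + 1) (h : σ β l < σ β k) :
    reflect (ball β l) (ball β k) (D.state σ) = D.state (exchange σ β k l) := by
  have hne : l ≠ k := fun h' => by simp [h'] at hkl
  have hb : ball β l ≠ ball β k := fun h' => hne (ball_injective h').2
  have h1 := (D.pos_eq_iff β h _).2 rfl
  rw [pos, pos] at h1
  have hoth : ∀ i, i ≠ ball β l → i ≠ ball β k →
      (reflect (ball β l) (ball β k) (D.state σ)).1 i = (D.state σ).1 i ∧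
      (reflect (ball β l) (ball β k) (D.state σ)).2 i = (D.state σ).2 i := by
    intro i hl hk
    simp [reflect, D.kick_meet σ hkl h, dipole_other hl hk]
  have hl : (reflect (ball β l) (ball β k) (D.state σ)).1 (ball β l) =
        (D.state (exchange σ β k l)).1 (ball β l) ∧
      (reflect (ball β l) (ball β k) (D.state σ)).2 (ball β l) =
        (D.state (exchange σ β k l)).2 (ball β l) := by
    simp only [reflect, D.kick_meet σ hkl h, (D.isEntry_meet σ hkl h).pairTime_eq, Pi.sub_apply,
      Pi.add_apply, Pi.smul_apply, dipole_left hb, state_fst_ball, state_snd_ball,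
      exchange_apply, Equiv.swap_apply_right, smul_smul, ← sub_smul, ← add_smul, height, pos]
    constructor <;> congr 1 <;> linarith
  have hk : (reflect (ball β l) (ball β k) (D.state σ)).1 (ball β k) =
        (D.state (exchange σ β k l)).1 (ball β k) ∧
      (reflect (ball β l) (ball β k) (D.state σ)).2 (ball β k) =
        (D.state (exchange σ β k l)).2 (ball β k) := by
    simp only [reflect, D.kick_meet σ hkl h, (D.isEntry_meet σ hkl h).pairTime_eq, Pi.sub_apply,
      Pi.add_apply, Pi.smul_apply, dipole_right hb, state_fst_ball, state_snd_ball,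
      exchange_apply, Equiv.swap_apply_left, smul_neg, smul_smul, ← neg_smul, ← sub_smul,
      ← add_smul, height, pos]
    constructor <;> congr 1 <;> linarith
  have key : ∀ i, (reflect (ball β l) (ball β k) (D.state σ)).1 i =
        (D.state (exchange σ β k l)).1 i ∧
      (reflect (ball β l) (ball β k) (D.state σ)).2 i = (D.state (exchange σ β k l)).2 i := by
    intro i
    by_cases hil : i = ball β l
    · rw [hil]
      exact hl
    by_cases hik : i = ball β k
    · rw [hik]
      exact hk
    rw [(hoth i hil hik).1, (hoth i hil hik).2]
    rcases index_cases i with rfl | ⟨γ, m, rfl⟩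
    · exact ⟨rfl, rfl⟩
    · have hσ : exchange σ β k l γ m = σ γ m := by
        by_cases hγ : γ = β
        · subst hγ
          rw [exchange_apply, Equiv.swap_apply_of_ne_of_ne]
          · rintro rfl
            exact hik rfl
          · rintro rfl
            exact hil rfl
        · rw [exchange_of_ne _ hγ]
      simp only [state_fst_ball, state_snd_ball, hσ, and_self]
  exact Prod.ext (funext fun i => (key i).1) (funext fun i => (key i).2)

end Adjacent

/-- The meetings after time `r`. -/
noncomputable def crossings (r : ℝ) : Finset (Bool × Fin n × Fin n) :=
  {q | q.2.1 < q.2.2 ∧ r < D.meet q.1 q.2.1 q.2.2}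

lemma mem_crossings {r : ℝ} {β : Bool} {a b : Fin n} :
    (β, a, b) ∈ D.crossings r ↔ a < b ∧ r < D.meet β a b := by simp [crossings]

lemma card_crossings {r : ℝ} (h : ∀ β a b, a < b → r < D.meet β a b) :
    (D.crossings r).card = n * (n - 1) := by
  have h1 : (D.crossings r).card = (Finset.univ : Finset (Fin n)).offDiag.card := by
    refine Finset.card_nbij' (fun q => if q.1 then (q.2.1, q.2.2) else (q.2.2, q.2.1))
      (fun q => if q.1 < q.2 then (true, q.1, q.2) else (false, q.2, q.1)) ?_ ?_ ?_ ?_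
    · rintro ⟨β, a, b⟩ hq
      have := ((D.mem_crossings).1 hq).1
      cases β <;> simp [this.ne, this.ne']
    · rintro ⟨a, b⟩ hq
      have hne : a ≠ b := by simpa using hq
      rcases lt_or_gt_of_ne hne with h2 | h2
      · simpa [h2, mem_crossings] using h _ _ _ h2
      · simpa [h2.not_gt, h2, mem_crossings] using h _ _ _ h2
    · rintro ⟨β, a, b⟩ hq
      have := ((D.mem_crossings).1 hq).1
      cases β <;> simp [this, this.not_gt]
    · rintro ⟨a, b⟩ hq
      have hne : a ≠ b := by simpa using hq
      rcases lt_or_gt_of_ne hne with h2 | h2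
      · simp [h2]
      · simp [h2.not_gt]
  rw [h1, Finset.offDiag_card, Finset.card_univ, Fintype.card_fin, Nat.mul_sub, mul_one]

lemma swap_lt_swap {k l k' l' : Fin n} (hkl : (l : ℕ) = k + 1) (h : k' < l')
    (hne : ¬ (k' = k ∧ l' = l)) : Equiv.swap k l k' < Equiv.swap k l l' := by
  simp only [Equiv.swap_apply_def]
  simp only [Fin.ext_iff] at hne
  rw [Fin.lt_def] at h
  split_ifs with h1 h2 h3 h4 h5 h6 h7 h8 <;> simp only [Fin.ext_iff, Fin.lt_def] at * <;> omega

/-- The chains evolve through all the crossings of the lines. -/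
theorem robust {Q : Set ((BBIndex 1 n → EuclideanSpace ℝ (Fin 2)) ×
    (BBIndex 1 n → EuclideanSpace ℝ (Fin 2)))} (hQ : D.state (fun _ => 1) ∈ Q) (m : ℕ) {r : ℝ}
    (hr : ∀ β a b, a < b → D.meet β a b ≠ r)
    (hσ : ∀ β, StrictMono fun k => D.pos β (σ β k) r) (hm : (D.crossings r).card = m) :
    Robust Q m r (D.state σ) := by
  induction m generalizing r σ with
  | zero =>
    have h1 : ∀ β a b, a < b → D.meet β a b < r := by
      intro β a b hab
      refine lt_of_le_of_ne (not_lt.1 fun hlt => ?_) (hr β a b hab)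
      have := D.mem_crossings.2 ⟨hab, hlt⟩
      rw [Finset.card_eq_zero.1 hm] at this
      simp at this
    have h2 : ∀ β, StrictMono fun a => D.pos β a r := fun β a b hab =>
      (D.pos_lt_iff β hab r).2 (h1 β a b hab)
    have h3 : ∀ β, StrictMono (σ β) := fun β k l hkl => (h2 β).lt_iff_lt.1 (hσ β hkl)
    have h4 : σ = fun _ => 1 := by
      funext β
      refine DFunLike.coe_injective (((h3 β).range_inj strictMono_id).1 ?_)
      rw [(σ β).surjective.range_eq, Set.range_id]
    subst h4
    refine ⟨hQ, fun i j hij t ht => D.far _ ht.2 hij fun β k l hkl _ => ?_⟩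
    exact (D.pos_lt_iff β hkl t).2 ((h1 β k l hkl).trans_le ht.1)
  | succ m ih =>
    have hne : (D.crossings r).Nonempty := Finset.card_pos.1 (by omega)
    obtain ⟨⟨β, a, b⟩, hq, hmin⟩ :=
      (D.crossings r).exists_min_image (fun q => D.meet q.1 q.2.1 q.2.2) hne
    obtain ⟨hab, hrt⟩ := D.mem_crossings.1 hq
    have hlt : ∀ γ c d, c < d → r < D.meet γ c d → (γ, c, d) ≠ (β, a, b) →
        D.meet β a b < D.meet γ c d := by
      intro γ c d hcd hr' hne'
      refine lt_of_le_of_ne (hmin (γ, c, d) (D.mem_crossings.2 ⟨hcd, hr'⟩)) fun heq => hne' ?_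
      obtain ⟨rfl, rfl, rfl⟩ := D.meetTime_inj _ _ _ _ _ _ hab hcd heq
      rfl
    obtain ⟨r₂, ⟨hr₂0, hr₂⟩, ht₂⟩ : ∃ r₂, (r₂ < 0 ∧ ∀ q ∈ D.crossings r, q ≠ (β, a, b) →
        r₂ < D.meet q.1 q.2.1 q.2.2) ∧ D.meet β a b < r₂ := by
      have e1 : ∀ᶠ x in 𝓝[>] (D.meet β a b), x < 0 :=
        nhdsWithin_le_nhds (gt_mem_nhds (D.meet_neg β hab))
      have e2 : ∀ᶠ x in 𝓝[>] (D.meet β a b), ∀ q ∈ D.crossings r, q ≠ (β, a, b) →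
          x < D.meet q.1 q.2.1 q.2.2 := by
        rw [Filter.eventually_all_finset]
        rintro ⟨γ, c, d⟩ hq'
        obtain ⟨h1, h2⟩ := D.mem_crossings.1 hq'
        by_cases h3 : (γ, c, d) = (β, a, b)
        · simp [h3]
        · filter_upwards [nhdsWithin_le_nhds (gt_mem_nhds (hlt γ c d h1 h2 h3))] with x hx _
          exact hx
      exact ((e1.and e2).and self_mem_nhdsWithin).exists
    have hrr₂ : r < r₂ := hrt.trans ht₂
    have hpers : ∀ γ c d, ¬ (γ = β ∧ (c = a ∧ d = b ∨ c = b ∧ d = a)) → ∀ t ∈ Set.Icc r r₂,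
        D.pos γ c r < D.pos γ d r → D.pos γ c t < D.pos γ d t := by
      intro γ c d hcd t ht hpos
      refine D.pos_lt_of_pos_lt ?_ (Set.left_mem_Icc.2 hrr₂.le) ht hpos
      intro c' d' hcd' hor hmem
      have hne' : (γ, c', d') ≠ (β, a, b) := by
        intro heq
        simp only [Prod.mk.injEq] at heq
        obtain ⟨rfl, rfl, rfl⟩ := heq
        exact hcd ⟨rfl, by tauto⟩
      have hr' := lt_of_le_of_ne hmem.1 (hr γ c' d' hcd').symm
      exact (hr₂ _ (D.mem_crossings.2 ⟨hcd', hr'⟩) hne').not_ge hmem.2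
    obtain ⟨k, rfl⟩ := (σ β).surjective b
    obtain ⟨l, rfl⟩ := (σ β).surjective a
    have hkl : k < l := (hσ β).lt_iff_lt.1 ((D.pos_gt_iff β hab r).2 hrt)
    have hadj : (l : ℕ) = k + 1 := by
      by_contra hcon
      have hkl' : (k : ℕ) < l := hkl
      obtain ⟨c, hkc, hcl⟩ : ∃ c : Fin n, k < c ∧ c < l :=
        ⟨⟨k + 1, by omega⟩, Fin.lt_def.2 (by simp), Fin.lt_def.2 (by simp; omega)⟩
      have ht : D.meet β (σ β l) (σ β k) ∈ Set.Icc r r₂ := ⟨hrt.le, ht₂.le⟩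
      have h1 := hpers β (σ β k) (σ β c) (by simp [hkc.ne', hcl.ne]) _ ht (hσ β hkc)
      have h2 := hpers β (σ β c) (σ β l) (by simp [hkc.ne', hcl.ne]) _ ht (hσ β hcl)
      have h3 := (D.pos_eq_iff β hab _).2 rfl
      linarith
    have hentry := D.isEntry_meet σ hadj hab
    have hσ₂ : ∀ γ k' l', k' < l' → ¬ (γ = β ∧ k' = k ∧ l' = l) → ∀ t ∈ Set.Icc r r₂,
        D.pos γ (exchange σ β k l γ k') t < D.pos γ (exchange σ β k l γ l') t := by
      intro γ k' l' hkl' hne' t ht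
      by_cases hγ : γ = β
      · subst hγ
        have h1 := swap_lt_swap hadj hkl' fun h => hne' ⟨rfl, h⟩
        rw [exchange_apply, exchange_apply]
        refine hpers γ _ _ ?_ t ht (hσ γ h1)
        simp only [(σ γ).injective.eq_iff]
        rintro ⟨-, ⟨h2, h3⟩ | ⟨h2, h3⟩⟩
        · rw [h2, h3] at h1
          exact hkl.not_gt h1
        · rw [Equiv.swap_apply_eq_iff, Equiv.swap_apply_left] at h2
          rw [Equiv.swap_apply_eq_iff, Equiv.swap_apply_right] at h3
          rw [h2, h3] at hkl'
          exact hkl.not_gt hkl'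
      · rw [exchange_of_ne σ hγ]
        exact hpers γ _ _ (fun h => hγ h.1) t ht (hσ γ hkl')
    refine ⟨ball β l, ball β k, r, r₂, hentry.pairDisc_pos, le_rfl, ?_, ?_, hr₂0, ?_, ?_, ?_⟩
    · rwa [hentry.pairTime_eq]
    · rwa [hentry.pairTime_eq]
    · intro i j hij t ht
      refine D.far σ (ht.2.trans hr₂0.le) hij.1 fun γ k' l' hkl' hor => ?_
      refine hpers γ _ _ ?_ t ht (hσ γ hkl')
      rintro ⟨rfl, h1⟩
      simp only [(σ γ).injective.eq_iff] at h1
      have := hij.2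
      rcases h1 with ⟨rfl, rfl⟩ | ⟨rfl, rfl⟩ <;> tauto
    · intro i j hij t ht
      rw [D.reflect_state σ hadj hab]
      refine D.far _ (ht.2.trans hr₂0.le) hij.1 fun γ k' l' hkl' hor => ?_
      refine hσ₂ γ k' l' hkl' ?_ t ht
      rintro ⟨rfl, rfl, rfl⟩
      have := hij.2
      tauto
    · rw [D.reflect_state σ hadj hab]
      have hcr : D.crossings r₂ = (D.crossings r).erase (β, σ β l, σ β k) := by
        ext ⟨γ, c, d⟩
        rw [Finset.mem_erase, mem_crossings, mem_crossings]
        constructor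
        · rintro ⟨h1, h2⟩
          refine ⟨?_, h1, hrr₂.trans h2⟩
          intro heq
          simp only [Prod.mk.injEq] at heq
          obtain ⟨rfl, rfl, rfl⟩ := heq
          exact lt_asymm h2 ht₂
        · rintro ⟨h1, h2, h3⟩
          exact ⟨h2, hr₂ _ (D.mem_crossings.2 ⟨h2, h3⟩) h1⟩
      refine ih _ ?_ ?_ ?_
      · intro γ c d hcd heq
        by_cases h1 : (γ, c, d) = (β, σ β l, σ β k)
        · simp only [Prod.mk.injEq] at h1
          obtain ⟨rfl, rfl, rfl⟩ := h1
          exact ht₂.ne heq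
        · have := hr₂ _ (D.mem_crossings.2 ⟨hcd, heq ▸ hrr₂⟩) h1
          exact this.ne' heq
      · intro γ k' l' hkl'
        by_cases h1 : γ = β ∧ k' = k ∧ l' = l
        · obtain ⟨rfl, rfl, rfl⟩ := h1
          simp only [exchange_apply, Equiv.swap_apply_left, Equiv.swap_apply_right]
          exact (D.pos_lt_iff γ hab r₂).2 ht₂
        · exact hσ₂ γ k' l' hkl' h1 r₂ (Set.right_mem_Icc.2 hrr₂.le)
      · rw [hcr, Finset.card_erase_of_mem hq, hm, Nat.add_sub_cancel]

end Lines

end Chains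

section Chains

variable {n : ℕ}

lemma exists_transcendental_gt (x : ℝ) : ∃ θ, x < θ ∧ Transcendental ℤ θ := by
  obtain ⟨θ, h1, h2⟩ := ((Algebraic.countable ℤ ℝ).dense_compl ℝ).exists_between
    (lt_add_one x)
  exact ⟨θ, h2.1, h1⟩

/-- Exponents which separate the lines. -/
def expo (β : Bool) (k : Fin n) : ℕ := 2 * k + β.toNat

lemma expo_inj {β γ : Bool} {k l : Fin n} (h : expo β k = expo γ l) : β = γ ∧ k = l := by
  simp only [expo, Fin.ext_iff] at *
  cases β <;> cases γ <;> simp at * <;> omega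

lemma expo_strictMono (β : Bool) : StrictMono (expo (n := n) β) := by
  intro k l h
  simp only [expo, Fin.lt_def] at *
  omega

open Polynomial in
lemma eq_of_transcendental {θ : ℝ} (hθ : Transcendental ℤ θ) {p q : ℤ} {i j k l : ℕ}
    (hp : 0 < p) (hq : 0 < q) (hij : i ≠ j)
    (h : (p : ℝ) * (θ ^ i - θ ^ j) = q * (θ ^ k - θ ^ l)) : k = i ∧ l = j := by
  have h1 : C p * (X ^ i - X ^ j) - C q * (X ^ k - X ^ l) = 0 := by
    refine (transcendental_iff.1 hθ) _ ?_
    simp only [map_sub, map_mul, map_pow, aeval_C, aeval_X]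
    simpa using sub_eq_zero.2 h
  have h2 := congrArg (fun P => coeff P i) h1
  have h3 := congrArg (fun P => coeff P j) h1
  simp only [coeff_sub, coeff_C_mul, coeff_X_pow, coeff_zero, if_true, if_neg hij,
    if_neg hij.symm] at h2 h3
  constructor
  · by_contra hcon
    rw [if_neg (Ne.symm hcon)] at h2
    split_ifs at h2 <;> linarith
  · by_contra hcon
    rw [if_neg (Ne.symm hcon)] at h3
    split_ifs at h3 <;> linarith

lemma exists_lines (n : ℕ) {y g η : ℝ} {f : Bool → ℝ} (hy : 0 < y) (hg : 0 < g) (hη : 0 < η)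
    (hf : ∀ β, 0 < f β) : ∃ D : Lines n, D.y = y ∧ (∀ β k, D.z β k = f β + g * (k : ℕ)) ∧
      ∀ β k, |D.V β k| < η := by
  obtain ⟨θ, hθ1, hθ⟩ := exists_transcendental_gt 1
  have hθ0 : 0 < θ := one_pos.trans hθ1
  set M := θ ^ (2 * n + 2) with hM
  have hM0 : 0 < M := by positivity
  have hδ : 0 < η / M := by positivity
  have hz : ∀ β, StrictMono fun k : Fin n => f β + g * (k : ℕ) := by
    intro β k l h
    have : ((k : ℕ) : ℝ) < (l : ℕ) := by exact_mod_cast h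
    simp only
    nlinarith
  have he : ∀ β (k : Fin n), θ ^ expo β k < M := by
    intro β k
    refine pow_lt_pow_right₀ hθ1 ?_
    have := k.2
    cases β <;> simp only [expo, Bool.toNat_false, Bool.toNat_true] <;> omega
  have hV : ∀ β, StrictMono fun k : Fin n => η / M * (θ ^ expo β k - M) := by
    intro β k l h
    have := pow_lt_pow_right₀ hθ1 (expo_strictMono β h)
    simp only
    nlinarith
  refine ⟨⟨y, fun β k => f β + g * (k : ℕ), fun β k => η / M * (θ ^ expo β k - M), hy, ?_, ?_,
    hz, hV, ?_⟩, rfl, fun _ _ => rfl, ?_⟩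
  · intro β k
    have := hf β
    positivity
  · intro β k
    exact mul_neg_of_pos_of_neg hδ (sub_neg.2 (he β k))
  · intro β a b γ c d hab hcd heq
    have h1 := (sub_pos.2 (hV β hab)).ne'
    have h2 := (sub_pos.2 (hV γ hcd)).ne'
    simp only [meetTime] at heq
    rw [div_eq_div_iff h1 h2] at heq
    have hc : g * (η / M) ≠ 0 := by positivity
    have h3 : (((b : ℕ) - (a : ℕ) : ℤ) : ℝ) * (θ ^ expo γ d - θ ^ expo γ c) =
        ((d : ℕ) - (c : ℕ) : ℤ) * (θ ^ expo β b - θ ^ expo β a) := by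
      refine mul_left_cancel₀ hc ?_
      push_cast
      linear_combination -heq
    have hab' : (a : ℕ) < b := hab
    have hcd' : (c : ℕ) < d := hcd
    obtain ⟨h4, h5⟩ := eq_of_transcendental hθ (by omega) (by omega)
      (expo_strictMono γ hcd).ne' h3
    exact ⟨(expo_inj h4).1, (expo_inj h5).2, (expo_inj h4).2⟩
  · intro β k
    have h1 : 0 < θ ^ expo β k := by positivity
    simp only
    rw [abs_of_neg (mul_neg_of_pos_of_neg hδ (sub_neg.2 (he β k)))]
    calc -(η / M * (θ ^ expo β k - M)) = η / M * (M - θ ^ expo β k) := by ring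
      _ < η / M * M := by gcongr; linarith
      _ = η := div_mul_cancel₀ _ hM0.ne'

end Chains

section Chains

variable {n : ℕ}

namespace Lines

/-- Perturbed chains evolve into any given neighbourhood of the state with all crossings
completed. -/
theorem exists_isFlow (D : Lines n) {Q : Set ((BBIndex 1 n → EuclideanSpace ℝ (Fin 2)) ×
    (BBIndex 1 n → EuclideanSpace ℝ (Fin 2)))} (hQo : IsOpen Q)
    (hQ : D.state (fun _ => 1) ∈ Q) : ∃ τ s, IsFlow τ s ∧ τ 0 < 0 ∧
      (∀ i j, i ≠ j → ∀ t, t ≤ τ 0 → 2 ≤ ‖relPos (s 0) i j t‖) ∧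
      (∀ k < n * (n - 1), ∃ i j, CollisionStep i j (τ k) (s k) (τ (k + 1)) (s (k + 1))) ∧
      τ (n * (n - 1)) < 0 ∧ 0 < τ (n * (n - 1) + 1) ∧ s (n * (n - 1)) ∈ Q := by
  obtain ⟨T, ⟨hT0, hTy⟩, hT⟩ :
      ∃ T, (T < 0 ∧ D.y + T < 0) ∧ ∀ β a b, a < b → T < D.meet β a b := by
    have e : ∀ᶠ T in atBot, ∀ β a b, a < b → T < D.meet β a b := by
      simp only [eventually_all]
      exact fun β a b _ => eventually_lt_atBot _
    obtain ⟨T, ⟨h0, h1⟩, h2⟩ :=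
      (((eventually_lt_atBot (0 : ℝ)).and (eventually_lt_atBot (-D.y))).and e).exists
    exact ⟨T, ⟨h0, by linarith⟩, h2⟩
  let σ : Bool → Equiv.Perm (Fin n) := fun _ => Fin.revPerm
  have hσ : ∀ β, StrictMono fun k => D.pos β (σ β k) T := by
    intro β k l hkl
    have h1 : σ β l < σ β k := Fin.rev_lt_rev.2 hkl
    exact (D.pos_gt_iff β h1 T).2 (hT β _ _ h1)
  have hV : ∀ β k l, k < l → D.V β (σ β l) < D.V β (σ β k) := fun β k l hkl =>
    D.V_mono β (Fin.rev_lt_rev.2 hkl)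
  have hrob := D.robust σ hQ _ (fun β a b hab => (hT β a b hab).ne') hσ (D.card_crossings hT)
  have hmem : ∀ᶠ s in 𝓝 (D.state σ), Robust Q (n * (n - 1)) T s ∧
      ∀ i j, i ≠ j → 2 < ‖relPos s i j T‖ ∧ ⟪relPos s i j T, relVel s i j⟫ < 0 := by
    refine ((isOpen_robust hQo _ T).eventually_mem hrob).and ?_
    simp only [eventually_all]
    intro i j hij
    have hc : Continuous fun s : (BBIndex 1 n → EuclideanSpace ℝ (Fin 2)) ×
        (BBIndex 1 n → EuclideanSpace ℝ (Fin 2)) => relPos s i j T :=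
      (continuous_relPos i j).comp (continuous_id.prodMk continuous_const)
    refine (hc.norm.continuousAt.eventually (lt_mem_nhds ?_)).and
      ((hc.inner (continuous_relVel i j)).continuousAt.eventually (gt_mem_nhds ?_))
    · exact D.far σ hT0.le hij fun β k l hkl _ => hσ β hkl
    · exact D.approach σ hT0.le hTy hij (fun β k l hkl => hσ β hkl) hV
  obtain ⟨s₀, hg, hs₀, hs₁⟩ := dense_genericForever.inter_nhds_nonempty hmem
  obtain ⟨τ, s, hτ, hs, hflow⟩ := HardBalls.exists_isFlow (τ₀ := T)
    (fun i j hij => ⟨(hs₁ i j hij).1.le, fun h => absurd h (hs₁ i j hij).1.ne'⟩) hg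
  have := hflow.of_robust (n * (n - 1)) 0 hτ.le hT0
    (fun k l t h1 h2 => absurd h2 (by rw [hτ] at h1; exact h1.not_ge)) (by rwa [hs])
  simp only [zero_add] at this
  refine ⟨τ, s, hflow, hτ ▸ hT0, fun i j hij t ht => ?_, this⟩
  rw [hτ] at ht
  rw [hs]
  have h1 := hs₁ i j hij
  have h2 := norm_sq_line_shift (relPos s₀ i j 0) (relVel s₀ i j) T t
  have h3 : ∀ t, relPos s₀ i j 0 + t • relVel s₀ i j = relPos s₀ i j t := fun t => by
    simp [relPos, relVel]
  simp only [h3] at h2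
  have h4 : 0 ≤ (t - T) * ⟪relPos s₀ i j T, relVel s₀ i j⟫ :=
    mul_nonneg_of_nonpos_of_nonpos (by linarith) h1.2.le
  nlinarith [norm_nonneg (relPos s₀ i j t), sq_nonneg ((t - T) * ‖relVel s₀ i j‖)]

end Lines

/-- Unit vectors orthogonal to the chains. -/
noncomputable def perp : Bool → EuclideanSpace ℝ (Fin 2)
  | false => u1
  | true => u2

lemma inner_perp_dir (β : Bool) : ⟪perp β, dir β⟫ = 0 := by
  rw [inner_fin_two]
  cases β <;> simp [w1, w2, u1, u2, dir, perp] <;> ring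

lemma inner_perp_w0 (β : Bool) : ⟪perp β, w0⟫ = √3 / 2 := by
  rw [inner_fin_two]
  cases β <;> simp [w0, u1, u2, perp]

/-- The gap between the fast disc and a chain. -/
noncomputable def firstGap (hn : 0 < n) (s : (BBIndex 1 n → EuclideanSpace ℝ (Fin 2)) ×
    (BBIndex 1 n → EuclideanSpace ℝ (Fin 2))) (β : Bool) : ℝ :=
  ⟪dir β, s.1 (ball β ⟨0, hn⟩) - s.1 cue⟫ - 2

/-- The gap between consecutive discs of a chain. -/
noncomputable def nextGap (s : (BBIndex 1 n → EuclideanSpace ℝ (Fin 2)) ×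
    (BBIndex 1 n → EuclideanSpace ℝ (Fin 2))) (β : Bool) (i : Fin n) (h : (i : ℕ) + 1 < n) : ℝ :=
  ⟪dir β, s.1 (ball β ⟨i + 1, h⟩) - s.1 (ball β i)⟫ - 2

/-- The Euclidean norm of all the velocities. -/
noncomputable def speed (s : (BBIndex 1 n → EuclideanSpace ℝ (Fin 2)) ×
    (BBIndex 1 n → EuclideanSpace ℝ (Fin 2))) : ℝ := √(∑ i, ‖s.2 i‖ ^ 2)

/-- Strict form of the initial conditions. -/
def Prepared (hn : 0 < n) (ε ρ : ℝ) (s : (BBIndex 1 n → EuclideanSpace ℝ (Fin 2)) ×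
    (BBIndex 1 n → EuclideanSpace ℝ (Fin 2))) : Prop :=
  ((∀ β, 0 < ⟪dir β, s.1 cue⟫) ∧ ⟪w0, s.1 cue⟫ < ε) ∧
  ((∀ β, |⟪perp β, s.1 cue⟫| < ε) ∧ ∀ β k, |⟪perp β, s.1 (ball β k)⟫| < ε) ∧
  ((∀ β, ε * ρ⁻¹ < firstGap hn s β ∧ firstGap hn s β < ε) ∧
    ∀ β i h, ε * ρ⁻¹ < nextGap s β i h ∧ nextGap s β i h < ε) ∧
  3 * firstGap hn s false < 2 * firstGap hn s true ∧
  ‖s.2 cue - speed s • w0‖ < ε * speed s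

lemma isOpen_prepared (hn : 0 < n) (ε ρ : ℝ) : IsOpen {s | Prepared hn ε ρ s} := by
  refine isOpen_iff_eventually.2 fun s hs => ?_
  obtain ⟨⟨h1, h2⟩, ⟨h3, h4⟩, ⟨h5, h6⟩, h7, h8⟩ := hs
  have e1 : ∀ (i : BBIndex 1 n) (v : EuclideanSpace ℝ (Fin 2)),
      Continuous fun s : (BBIndex 1 n → EuclideanSpace ℝ (Fin 2)) ×
        (BBIndex 1 n → EuclideanSpace ℝ (Fin 2)) => ⟪v, s.1 i⟫ := by fun_prop
  have e2 : ∀ β, Continuous fun s => firstGap hn s β := by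
    unfold firstGap
    fun_prop
  have e3 : ∀ (β : Bool) (i : Fin n) h, Continuous fun s => nextGap s β i h := by
    unfold nextGap
    fun_prop
  have e4 : Continuous (speed (n := n)) := by
    unfold speed
    fun_prop
  refine (Filter.Eventually.and ?_ ?_).and ((Filter.Eventually.and ?_ ?_).and
    ((Filter.Eventually.and ?_ ?_).and (Filter.Eventually.and ?_ ?_)))
  · exact eventually_all.2 fun β => (e1 _ _).continuousAt.eventually (lt_mem_nhds (h1 β))
  · exact (e1 _ _).continuousAt.eventually (gt_mem_nhds h2)
  · exact eventually_all.2 fun β => (e1 _ _).abs.continuousAt.eventually (gt_mem_nhds (h3 β))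
  · simp only [eventually_all]
    exact fun β k => (e1 _ _).abs.continuousAt.eventually (gt_mem_nhds (h4 β k))
  · exact eventually_all.2 fun β =>
      ((e2 β).continuousAt.eventually (lt_mem_nhds (h5 β).1)).and
        ((e2 β).continuousAt.eventually (gt_mem_nhds (h5 β).2))
  · simp only [eventually_all]
    exact fun β i h => ((e3 β i h).continuousAt.eventually (lt_mem_nhds (h6 β i h).1)).and
      ((e3 β i h).continuousAt.eventually (gt_mem_nhds (h6 β i h).2))
  · exact ((e2 false).const_mul 3).continuousAt.eventually_lt
      ((e2 true).const_mul 2).continuousAt h7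
  · refine ContinuousAt.eventually_lt ?_ ?_ h8 <;> refine Continuous.continuousAt ?_
    · exact (((continuous_apply cue).comp continuous_snd).sub (e4.smul continuous_const)).norm
    · exact e4.const_mul ε

lemma Prepared.initCond {hn : 0 < n} {ε ρ : ℝ} (hε : 0 < ε) (hρ : 0 < ρ)
    {s : (BBIndex 1 n → EuclideanSpace ℝ (Fin 2)) × (BBIndex 1 n → EuclideanSpace ℝ (Fin 2))}
    (h : Prepared hn ε ρ s) {S : BallSystem (BBIndex 1 n) 2 Set.univ}
    (hS : ∀ i, S.x i 0 = s.1 i) : InitCond 1 n one_pos hn S ε ρ 0 := by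
  obtain ⟨⟨h1, h2⟩, ⟨h3, h4⟩, ⟨h5, h6⟩, h7, h8⟩ := h
  simp only [InitCond, hS]
  have h9 : 0 < firstGap hn s true := lt_trans (by positivity) (h5 true).1
  refine ⟨⟨(h1 false).le, (h1 true).le, h2.le⟩, fun k hk => by omega, (h3 false).le,
    fun k => (h4 false k).le, (h3 true).le, fun k => (h4 true k).le, fun i hi => by omega,
    ⟨(h5 false).1.le, (h5 false).2.le⟩,
    fun i hi => ⟨(h6 false ⟨i, by omega⟩ hi).1.le, (h6 false ⟨i, by omega⟩ hi).2.le⟩,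
    ⟨(h5 true).1.le, (h5 true).2.le⟩,
    fun i hi => ⟨(h6 true ⟨i, by omega⟩ hi).1.le, (h6 true ⟨i, by omega⟩ hi).2.le⟩, Or.inl ?_⟩
  refine (div_le_iff₀ h9).2 ?_
  change firstGap hn s false ≤ 2 / 3 * firstGap hn s true
  linarith

lemma exists_prepared (hn : 0 < n) {ε ρ : ℝ} (hε0 : 0 < ε) (hε1 : ε < 1) (hρ : 3 / 2 < ρ) :
    ∃ D : Lines n, Prepared hn ε ρ (D.state fun _ => 1) := by
  have hr0 : 0 < ε * ρ⁻¹ := by positivity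
  have hr : ε * ρ⁻¹ < 2 / 3 * ε := by
    rw [← div_eq_mul_inv, div_lt_iff₀ (by linarith)]
    nlinarith
  obtain ⟨p, hp1, hp2⟩ := exists_between hr
  obtain ⟨g, hg1, hg2⟩ := exists_between (show 3 / 2 * p < ε by linarith)
  have hn' : (1 : ℝ) ≤ n := by exact_mod_cast hn
  obtain ⟨D, hy, hz, hV⟩ := exists_lines n (y := ε / 2) (g := g) (η := ε / (2 * n))
    (f := fun β => if β then g else p) (by linarith) (by linarith) (by positivity)
    (by intro β; cases β <;> simp <;> linarith)
  have hgap : ∀ β, firstGap hn (D.state fun _ => 1) β = if β then g else p := by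
    intro β
    have := hz β ⟨0, hn⟩
    rw [firstGap, Lines.state_fst_ball, Lines.state_fst_cue, inner_sub_right,
      real_inner_smul_right, real_inner_smul_right, inner_dir_self, inner_dir_w0, Lines.height,
      Lines.pos, Equiv.Perm.one_apply, this]
    simp
    ring
  have hnext : ∀ β i h, nextGap (D.state fun _ => 1) β i h = g := by
    intro β i h
    rw [nextGap, Lines.state_fst_ball, Lines.state_fst_ball, ← sub_smul, Lines.height_sub,
      real_inner_smul_right, inner_dir_self, Lines.pos, Lines.pos, Equiv.Perm.one_apply,
      Equiv.Perm.one_apply, hz, hz]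
    push_cast
    ring
  have hsum : ∑ i, ‖(D.state fun _ => 1).2 i‖ ^ 2 =
      1 + ∑ k, ‖(D.state fun _ => 1).2 (ball false k)‖ ^ 2 +
        ∑ k, ‖(D.state fun _ => 1).2 (ball true k)‖ ^ 2 := by
    rw [Fintype.sum_sum_type, Fintype.sum_sum_type, Fin.sum_univ_one, ← add_assoc]
    congr 2
    change ‖w0‖ ^ 2 = 1
    rw [norm_w0, one_pow]
  have hβ : ∀ β, ∑ k, ‖(D.state fun _ => 1).2 (ball β k)‖ ^ 2 < ε / 2 := by
    intro β
    have h1 : ∀ k ∈ Finset.univ, ‖(D.state fun _ => 1).2 (ball β k)‖ ^ 2 < ε / (2 * n) := by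
      intro k _
      have h2 := hV β k
      have h3 : ε / (2 * n) < 1 := by
        rw [div_lt_one (by positivity)]
        linarith
      rw [Lines.state_snd_ball, norm_smul, norm_dir, mul_one, Real.norm_eq_abs,
        Equiv.Perm.one_apply]
      nlinarith [abs_nonneg (D.V β k)]
    have h4 := Finset.sum_lt_sum_of_nonempty ⟨⟨0, hn⟩, Finset.mem_univ _⟩ h1
    rw [Finset.sum_const, Finset.card_univ, Fintype.card_fin, nsmul_eq_mul] at h4
    have h5 : (n : ℝ) * (ε / (2 * n)) = ε / 2 := by field_simp
    linarith
  have hN2 : speed (D.state fun _ => 1) ^ 2 < 1 + ε := by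
    rw [speed, Real.sq_sqrt (by positivity), hsum]
    linarith [hβ false, hβ true]
  have hN1 : 1 ≤ speed (D.state fun _ => 1) := by
    rw [speed, Real.one_le_sqrt, hsum, add_assoc]
    have : ∀ β, 0 ≤ ∑ k, ‖(D.state fun _ => 1).2 (ball β k)‖ ^ 2 := fun β => by positivity
    linarith [this false, this true]
  have hs3 : √3 < 2 := by
    rw [Real.sqrt_lt' (by norm_num)]
    norm_num
  refine ⟨D, ⟨fun β => ?_, ?_⟩, ⟨fun β => ?_, fun β k => ?_⟩,
    ⟨fun β => ?_, fun β i h => ?_⟩, ?_, ?_⟩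
  · rw [Lines.state_fst_cue, real_inner_smul_right, inner_dir_w0, hy]
    linarith
  · rw [Lines.state_fst_cue, real_inner_smul_right, inner_w0_w0, hy]
    linarith
  · rw [Lines.state_fst_cue, real_inner_smul_right, inner_perp_w0, hy, abs_of_pos (by positivity)]
    nlinarith
  · rw [Lines.state_fst_ball, real_inner_smul_right, inner_perp_dir, mul_zero, abs_zero]
    exact hε0
  · rw [hgap]
    cases β
    · exact ⟨hp1, by simp; linarith⟩
    · exact ⟨by simp; linarith, hg2⟩
  · rw [hnext]
    exact ⟨by linarith, hg2⟩
  · rw [hgap, hgap]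
    simp
    linarith
  · rw [Lines.state_snd_cue]
    nth_rewrite 1 [← one_smul ℝ w0]
    rw [← sub_smul, norm_smul, norm_w0, mul_one, Real.norm_eq_abs, abs_sub_comm,
      abs_of_nonneg (by linarith)]
    nlinarith

end Chains

end HardBalls

/-- preparation of the initial conditions.  For every `ε ∈ (0,1)`
and `ρ > 3/2` there are an elastic collision system `S` of `2 n1 + 1` unit discs in
`ℝ²` on the time interval `ℝ` (labeled with `m = 1`) and a time `T0 < 0` such that no
collisions occur in `(-∞, T0]`, exactly `n1 (n1 - 1)` collisions occur in `(T0, 0)`,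
`S` satisfies the `(ε,ρ)` initial conditions at time `0`, `|DS(0)| = 1` and
`|D a_1(0) - w0| ≤ ε`. -/
theorem preparation (n1 : ℕ) (hn1 : 0 < n1) (ε ρ : ℝ)
    (hε0 : 0 < ε) (hε1 : ε < 1) (hρ : 3 / 2 < ρ) :
    ∃ S : BallSystem (BBIndex 1 n1) 2 Set.univ, ∃ T0 : ℝ, T0 < 0 ∧
      (∀ p ∈ S.collisions, ¬ p.1 ≤ T0) ∧
      {p ∈ S.collisions | p.1 ∈ Set.Ioo T0 0}.Finite ∧
      {p ∈ S.collisions | p.1 ∈ Set.Ioo T0 0}.ncard = n1 * (n1 - 1) ∧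
      InitCond 1 n1 one_pos hn1 S ε ρ 0 ∧
      S.speedNorm 0 = 1 ∧
      ‖S.vr (Sum.inl (0 : Fin 1)) 0 - w0‖ ≤ ε := by
  obtain ⟨D, hD⟩ := HardBalls.exists_prepared hn1 hε0 hε1 hρ
  obtain ⟨τ, s, hflow, hτ0, hb, hK, hK0, hK1, hs⟩ :=
    D.exists_isFlow (HardBalls.isOpen_prepared hn1 ε ρ) hD
  have hidx : hflow.rightIndex 0 = n1 * (n1 - 1) :=
    hflow.rightIndex_eq_iff.2 ⟨hK1, Or.inr hK0.le⟩
  set N := HardBalls.speed (s (n1 * (n1 - 1))) with hN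
  have hN0 : 0 < N := pos_of_mul_pos_right ((norm_nonneg _).trans_lt hs.2.2.2.2) hε0.le
  have hc : 0 < N⁻¹ := inv_pos.2 hN0
  have hv : ∀ i, (HardBalls.changeTime hc (hflow.ballSystem hb)).vr i 0 =
      N⁻¹ • (s (n1 * (n1 - 1))).2 i := by
    intro i
    simp only [HardBalls.changeTime, HardBalls.IsFlow.ballSystem, mul_zero, hidx]
  refine ⟨HardBalls.changeTime hc (hflow.ballSystem hb), τ 0 / N⁻¹,
    div_neg_of_neg_of_pos hτ0 hc, fun p hp hle => ?_,
    (hflow.early_collisions hK hK0 hK1 hc).1, (hflow.early_collisions hK hK0 hK1 hc).2,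
    hs.initCond hε0 (by linarith) fun i => ?_, ?_, ?_⟩
  · rw [HardBalls.mem_collisions_changeTime, hflow.mem_collisions] at hp
    obtain ⟨k, i, j, -, hk⟩ := hp
    have h1 : N⁻¹ * p.1 = τ (k + 1) := congrArg Prod.fst hk
    rw [le_div_iff₀ hc, mul_comm, h1] at hle
    exact hle.not_gt (hflow.strictMono (Nat.succ_pos k))
  · simp only [HardBalls.changeTime, HardBalls.IsFlow.ballSystem, mul_zero,
      HardBalls.IsFlow.path, hidx, zero_smul, add_zero]
  · rw [HardBalls.speedNorm_changeTime, mul_zero, BallSystem.speedNorm]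
    simp only [HardBalls.IsFlow.ballSystem, hidx]
    exact inv_mul_cancel₀ hN0.ne'
  · rw [hv]
    have h1 := hs.2.2.2.2
    rw [← hN] at h1
    have h2 : N⁻¹ • (s (n1 * (n1 - 1))).2 HardBalls.cue - w0 =
        N⁻¹ • ((s (n1 * (n1 - 1))).2 HardBalls.cue - N • w0) := by
      rw [smul_sub, smul_smul, inv_mul_cancel₀ hN0.ne', one_smul]
    change ‖N⁻¹ • (s (n1 * (n1 - 1))).2 HardBalls.cue - w0‖ ≤ ε
    rw [h2, norm_smul, Real.norm_eq_abs, abs_of_pos hc, inv_mul_le_iff₀ hN0, mul_comm N ε]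
    exact h1.le
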